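/- arXiv:2604.13295 — 6 statements merged into one kernel-verified Lean document; each statement's English description precedes it below -/
import Mathlib

section
/- Let g : ℕ → (0,∞) be any function with g(n) → ∞, and let d = d(n) → ∞ satisfy n ≤ 2^{d(n)}. Let X = {x_1, …, x_n} consist of n points sampled independently and uniformly from the unit sphere S^{d−1} ⊂ ℝ^d. Then there is a constant C > 0 such that with probability tending to 1 as n → ∞ the following holds: for every B > 0 and every map f : X → ℝ² with ‖f(x)‖ ≤ B for all x ∈ X, at least (1 − C/g(n)²)·n of the points x ∈ X admit another point y ∈ X, y ≠ x, with ‖x − y‖ ≥ 0.2 and ‖f(x) − f(y)‖ ≤ 3·B·g(n)/√n. -/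
open MeasureTheory Filter Finset

noncomputable section

/-- The uniform (normalized surface) probability measure on the unit sphere in `ℝ^d`. -/
def sphereUniform (d : ℕ) : Measure (Metric.sphere (0 : EuclideanSpace ℝ (Fin d)) 1) :=
  ((volume : Measure (EuclideanSpace ℝ (Fin d))).toSphere Set.univ)⁻¹ •
    (volume : Measure (EuclideanSpace ℝ (Fin d))).toSphere

lemma sphereUniform_isProb (d : ℕ) (hd : 1 ≤ d) : IsProbabilityMeasure (sphereUniform d) := by
  have : Nonempty (Fin d) := ⟨⟨0, hd⟩⟩
  have h0 : (volume : Measure (EuclideanSpace ℝ (Fin d))).toSphere ≠ 0 :=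
    Measure.toSphere_ne_zero _
  constructor
  rw [sphereUniform, Measure.smul_apply, smul_eq_mul]
  exact ENNReal.inv_mul_cancel (Measure.measure_univ_ne_zero.2 h0) (measure_ne_top _ _)

open scoped Pointwise in
lemma cone_bound (d : ℕ) (hd : 1 ≤ d) (x : EuclideanSpace ℝ (Fin d))
    (s : Set (EuclideanSpace ℝ (Fin d))) (hs : ∀ y ∈ s, ‖y‖ = 1 ∧ ‖y - x‖ < 0.2) :
    (volume : Measure (EuclideanSpace ℝ (Fin d))).real (Set.Ioo (0 : ℝ) 1 • s) * 0.03 ≤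
      0.23 ^ d * (volume : Measure (EuclideanSpace ℝ (Fin d))).real (Metric.ball 0 1) := by
  have : Nonempty (Fin d) := ⟨⟨0, hd⟩⟩
  set μ := (volume : Measure (EuclideanSpace ℝ (Fin d)))
  set V := Set.Ioo (0 : ℝ) 1 • s with hV
  have hVb : V ⊆ Metric.ball 0 1 := by
    rintro _ ⟨t, ht, y, hy, rfl⟩
    simp only [Metric.mem_ball, dist_zero_right, norm_smul, (hs y hy).1, mul_one,
      Real.norm_eq_abs, abs_of_pos ht.1]
    exact ht.2
  have hsub : V ⊆ Metric.ball x 0.23 ∪ (0.97 : ℝ) • V := by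
    rintro _ ⟨t, ht, y, hy, rfl⟩
    by_cases h : t < 0.97
    · right
      refine ⟨(t / 0.97) • y, ⟨t / 0.97, ⟨by have := ht.1; positivity, ?_⟩, y, hy, rfl⟩, ?_⟩
      · rw [div_lt_one (by norm_num)]; exact h
      · simp only [smul_smul]
        congr 1
        field_simp
    · left
      push Not at h
      rw [Metric.mem_ball, dist_eq_norm]
      have e : t • y - x = (t - 1) • y + (y - x) := by module
      simp only [e]
      have h1 : ‖(t - 1) • y‖ = 1 - t := by
        rw [norm_smul, (hs y hy).1, Real.norm_eq_abs, abs_of_neg (by linarith [ht.2])]; ring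
      have h2 := norm_add_le ((t - 1) • y) (y - x)
      have h3 := (hs y hy).2
      norm_num at h h3 ⊢
      linarith
  have hfin : μ V ≠ ⊤ := ((measure_mono hVb).trans_lt measure_ball_lt_top).ne
  have hsm : μ.real ((0.97 : ℝ) • V) = 0.97 ^ d * μ.real V := by
    rw [measureReal_def, Measure.addHaar_smul, ENNReal.toReal_mul, finrank_euclideanSpace_fin,
      ENNReal.toReal_ofReal (by positivity), abs_of_pos (by positivity)]
    rfl
  have hball : μ.real (Metric.ball x 0.23) = 0.23 ^ d * μ.real (Metric.ball 0 1) := by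
    rw [measureReal_def, Measure.addHaar_ball _ _ (by norm_num), ENNReal.toReal_mul,
      finrank_euclideanSpace_fin, ENNReal.toReal_ofReal (by positivity)]
    rfl
  have hfin2 : μ (Metric.ball x 0.23 ∪ (0.97 : ℝ) • V) ≠ ⊤ := by
    refine (measure_union_lt_top measure_ball_lt_top ?_).ne
    rw [Measure.addHaar_smul]
    exact ENNReal.mul_lt_top ENNReal.ofReal_lt_top hfin.lt_top
  have h1 : μ.real V ≤ 0.23 ^ d * μ.real (Metric.ball 0 1) + 0.97 ^ d * μ.real V := by
    rw [← hball, ← hsm]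
    exact (measureReal_mono hsub hfin2).trans (measureReal_union_le _ _)
  have h2 : (0.97 : ℝ) ^ d ≤ 0.97 := pow_le_of_le_one (by norm_num) (by norm_num) (by omega)
  have h3 := mul_le_mul_of_nonneg_right h2 (measureReal_nonneg (μ := μ) (s := V))
  norm_num at h1 h3 ⊢
  linarith

lemma cap_bound (d : ℕ) (hd : 1 ≤ d) (x : Metric.sphere (0 : EuclideanSpace ℝ (Fin d)) 1) :
    sphereUniform d {y | ‖(x : EuclideanSpace ℝ (Fin d)) - y‖ < 0.2} ≤
      ENNReal.ofReal (0.23 ^ d / 0.03) := by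
  have := sphereUniform_isProb d hd
  have : Nonempty (Fin d) := ⟨⟨0, hd⟩⟩
  set A : Set (Metric.sphere (0 : EuclideanSpace ℝ (Fin d)) 1) :=
    {y | ‖(x : EuclideanSpace ℝ (Fin d)) - y‖ < 0.2} with hA
  have hAm : MeasurableSet A := by
    apply IsOpen.measurableSet
    exact isOpen_lt (by fun_prop) (by fun_prop)
  set μ := (volume : Measure (EuclideanSpace ℝ (Fin d))) with hμ
  have hc := cone_bound d hd x (((↑) : Metric.sphere (0 : EuclideanSpace ℝ (Fin d)) 1 → _) '' A) (by
    rintro _ ⟨y, hy, rfl⟩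
    refine ⟨by simp, ?_⟩
    rw [norm_sub_rev]; exact hy)
  have hb : 0 < μ.real (Metric.ball 0 1) :=
    ENNReal.toReal_pos (Metric.measure_ball_pos _ _ one_pos).ne' measure_ball_lt_top.ne
  have hd' : (0 : ℝ) < d := by exact_mod_cast hd
  rw [ENNReal.le_ofReal_iff_toReal_le (measure_ne_top _ _) (by positivity)]
  rw [sphereUniform, Measure.smul_apply, smul_eq_mul, Measure.toSphere_apply' _ hAm,
    Measure.toSphere_apply_univ, finrank_euclideanSpace_fin]
  simp only [ENNReal.toReal_mul, ENNReal.toReal_inv, ENNReal.toReal_natCast]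
  change (d * μ.real _)⁻¹ * (d * μ.real _) ≤ _
  rw [← hμ] at hc
  rw [inv_mul_eq_div, mul_div_mul_left _ _ hd'.ne', div_le_div_iff₀ hb (by norm_num)]
  exact hc

lemma pair_bound (d n : ℕ) (hd : 1 ≤ d) (i j : Fin n) (hij : i ≠ j) :
    Measure.pi (fun _ : Fin n => sphereUniform d)
      {x | ‖(x i : EuclideanSpace ℝ (Fin d)) - x j‖ < 0.2} ≤
      ENNReal.ofReal (0.23 ^ d / 0.03) := by
  have := sphereUniform_isProb d hd
  have hI := (ProbabilityTheory.iIndepFun_pi (μ := fun _ : Fin n => sphereUniform d)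
    (X := fun _ => id) (fun _ => aemeasurable_id)).indepFun hij
  simp only [id] at hI
  rw [ProbabilityTheory.indepFun_iff_map_prod_eq_prod_map_map
    (measurable_pi_apply i).aemeasurable (measurable_pi_apply j).aemeasurable] at hI
  rw [(measurePreserving_eval (fun _ : Fin n => sphereUniform d) i).map_eq,
    (measurePreserving_eval (fun _ : Fin n => sphereUniform d) j).map_eq] at hI
  set S : Set (Metric.sphere (0 : EuclideanSpace ℝ (Fin d)) 1 ×
    Metric.sphere (0 : EuclideanSpace ℝ (Fin d)) 1) :=
    {p | ‖(p.1 : EuclideanSpace ℝ (Fin d)) - p.2‖ < 0.2} with hS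
  have hSm : MeasurableSet S := by
    apply IsOpen.measurableSet
    exact isOpen_lt (by fun_prop) (by fun_prop)
  have : Measure.pi (fun _ : Fin n => sphereUniform d)
      {x | ‖(x i : EuclideanSpace ℝ (Fin d)) - x j‖ < 0.2} =
      ((sphereUniform d).prod (sphereUniform d)) S := by
    rw [← hI, Measure.map_apply (by fun_prop) hSm]
    rfl
  rw [this, Measure.prod_apply hSm]
  calc _ ≤ ∫⁻ _, ENNReal.ofReal (0.23 ^ d / 0.03) ∂(sphereUniform d) :=
        lintegral_mono fun a => cap_bound d hd a
    _ = _ := by simp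

lemma bad_bound (d n : ℕ) (hd : 1 ≤ d) (hn : (n : ℝ) ≤ 2 ^ d) :
    Measure.pi (fun _ : Fin n => sphereUniform d)
      {x | ∃ i j : Fin n, i ≠ j ∧ ‖(x i : EuclideanSpace ℝ (Fin d)) - x j‖ < 0.2} ≤
      ENNReal.ofReal (0.92 ^ d / 0.03) := by
  have hsub : {x : Fin n → Metric.sphere (0 : EuclideanSpace ℝ (Fin d)) 1 |
      ∃ i j : Fin n, i ≠ j ∧ ‖(x i : EuclideanSpace ℝ (Fin d)) - x j‖ < 0.2} ⊆
      ⋃ p ∈ (Finset.univ.filter (fun p : Fin n × Fin n => p.1 ≠ p.2)),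
        {x | ‖(x p.1 : EuclideanSpace ℝ (Fin d)) - x p.2‖ < 0.2} := by
    rintro x ⟨i, j, hij, h⟩
    simp only [Set.mem_iUnion]
    exact ⟨(i, j), by simpa using hij, h⟩
  refine (measure_mono hsub).trans ((measure_biUnion_finset_le _ _).trans ?_)
  refine (Finset.sum_le_sum (g := fun _ => ENNReal.ofReal (0.23 ^ d / 0.03)) fun p hp =>
    pair_bound d n hd p.1 p.2 (by simpa using hp)).trans ?_
  rw [Finset.sum_const, nsmul_eq_mul]
  have hcard : (((Finset.univ.filter (fun p : Fin n × Fin n => p.1 ≠ p.2)).card : ℕ) : ℝ)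
      ≤ (n : ℝ) * n := by
    have := Finset.card_filter_le (Finset.univ : Finset (Fin n × Fin n)) (fun p => p.1 ≠ p.2)
    simp only [Finset.card_univ, Fintype.card_prod, Fintype.card_fin] at this
    exact_mod_cast this
  rw [← ENNReal.ofReal_natCast, ← ENNReal.ofReal_mul (by positivity)]
  apply ENNReal.ofReal_le_ofReal
  calc _ ≤ ((2 : ℝ) ^ d * 2 ^ d) * (0.23 ^ d / 0.03) := by
        gcongr
        exact hcard.trans (by gcongr)
    _ = _ := by
        rw [← mul_pow, ← mul_div_assoc, ← mul_pow]; norm_num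

lemma packing {ι : Type*} (T : Finset ι) (f : ι → EuclideanSpace ℝ (Fin 2)) (B r : ℝ)
    (hB : 0 < B) (hr : 0 < r) (hf : ∀ i, ‖f i‖ ≤ B)
    (hsep : ∀ i ∈ T, ∀ j ∈ T, i ≠ j → r < ‖f i - f j‖) :
    (T.card : ℝ) * (r / 2) ^ 2 ≤ (B + r / 2) ^ 2 := by
  set μ := (volume : Measure (EuclideanSpace ℝ (Fin 2)))
  have hdisj : (T : Set ι).PairwiseDisjoint (fun i => Metric.ball (f i) (r / 2)) := by
    intro i hi j hj hij
    apply Metric.ball_disjoint_ball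
    rw [dist_eq_norm]
    linarith [hsep i hi j hj hij]
  have hsub : (⋃ i ∈ T, Metric.ball (f i) (r / 2)) ⊆ Metric.ball 0 (B + r / 2) := by
    apply Set.iUnion₂_subset
    intro i _
    apply Metric.ball_subset_ball'
    rw [dist_zero_right]
    linarith [hf i]
  have hball : ∀ (x : EuclideanSpace ℝ (Fin 2)) (s : ℝ), 0 < s →
      μ.real (Metric.ball x s) = s ^ 2 * μ.real (Metric.ball 0 1) := by
    intro x s hs
    rw [measureReal_def, Measure.addHaar_ball _ _ hs.le, ENNReal.toReal_mul,
      finrank_euclideanSpace_fin, ENNReal.toReal_ofReal (by positivity)]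
    rfl
  have hb : 0 < μ.real (Metric.ball 0 1) :=
    ENNReal.toReal_pos (Metric.measure_ball_pos _ _ one_pos).ne' measure_ball_lt_top.ne
  have h1 := measureReal_mono (μ := μ) hsub measure_ball_lt_top.ne
  rw [measureReal_biUnion_finset hdisj (fun _ _ => measurableSet_ball)
    (fun _ _ => measure_ball_lt_top.ne), hball _ _ (by positivity),
    Finset.sum_congr rfl (fun i _ => hball (f i) (r / 2) (by positivity)), Finset.sum_const,
    nsmul_eq_mul, ← mul_assoc] at h1
  exact le_of_mul_le_mul_right h1 hb

lemma determ (n : ℕ) (hn : 2 ≤ n) (g : ℝ) (hg : 0 < g) (P : Fin n → Fin n → Prop)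
    (hP : ∀ i j, i ≠ j → P i j)
    (B : ℝ) (hB : 0 < B) (f : Fin n → EuclideanSpace ℝ (Fin 2)) (hf : ∀ i, ‖f i‖ ≤ B)
    (G : Finset (Fin n))
    (hG : ∀ i, i ∉ G → ¬ ∃ j, j ≠ i ∧ P i j ∧ ‖f i - f j‖ ≤ 3 * B * g / Real.sqrt n) :
    (1 - 2 / g ^ 2) * n ≤ G.card := by
  have hn0 : (0 : ℝ) < n := by exact_mod_cast (by omega : 0 < n)
  have hs : 0 < Real.sqrt n := Real.sqrt_pos.2 hn0
  have hss : Real.sqrt n ^ 2 = n := Real.sq_sqrt hn0.le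
  set r := 3 * B * g / Real.sqrt n with hr
  have hr0 : 0 < r := by positivity
  have hbad : ∀ i, i ∉ G → ∀ j, j ≠ i → r < ‖f i - f j‖ := by
    intro i hi j hj
    by_contra h
    exact hG i hi ⟨j, hj, hP i j hj.symm, not_lt.1 h⟩
  have hcard : ((Gᶜ).card : ℝ) + G.card = n := by
    have := Finset.card_compl_add_card G
    rw [Fintype.card_fin] at this
    exact_mod_cast this
  have key : ((Gᶜ).card : ℝ) ≤ 2 / g ^ 2 * n := by
    by_cases h : 2 * B ≤ r
    · have : Gᶜ = ∅ := by
        rw [Finset.eq_empty_iff_forall_notMem]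
        intro i hi
        have : Nontrivial (Fin n) := Fin.nontrivial_iff_two_le.2 hn
        obtain ⟨j, hj⟩ := exists_ne i
        have h1 := hbad i (by simpa using hi) j hj
        have h2 := norm_sub_le (f i) (f j)
        linarith [hf i, hf j]
      rw [this]
      simp only [Finset.card_empty, Nat.cast_zero]
      positivity
    · push Not at h
      have hp := packing (Gᶜ) f B r hB hr0 hf
        (fun i hi j _ hij => hbad i (by simpa using hi) j hij.symm)
      have h3 : (B + r / 2) ^ 2 ≤ (2 * B) ^ 2 := by gcongr; linarith
      have h4 : ((Gᶜ).card : ℝ) * r ^ 2 ≤ 16 * B ^ 2 := by nlinarith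
      have h5 : r ^ 2 = 9 * B ^ 2 * g ^ 2 / n := by
        rw [hr, div_pow, hss]; ring
      rw [h5] at h4
      rw [div_mul_eq_mul_div, le_div_iff₀ (by positivity)]
      have h6 : ((Gᶜ).card : ℝ) * g ^ 2 * 9 ≤ 16 * n := by
        have : ((Gᶜ).card : ℝ) * (9 * B ^ 2 * g ^ 2 / n) =
            (((Gᶜ).card : ℝ) * g ^ 2 * 9 / n) * B ^ 2 := by ring
        rw [this] at h4
        have := le_of_mul_le_mul_right h4 (by positivity)
        rwa [div_le_iff₀ hn0] at this
      linarith
  linarith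

/-- for `n` i.i.d. uniform points on `S^{d-1}` (with `n ≤ 2^d`, `d = d(n) → ∞`),
there is a constant `C > 0` such that with probability tending to `1` as `n → ∞`,
for every `B > 0` and every map `f` of the points into the ball of radius `B` of `ℝ²`,
at least `(1 - C/g(n)²)·n` of the points `x` admit another point `y ≠ x` with
`‖x - y‖ ≥ 0.2` and `‖f(x) - f(y)‖ ≤ 3·B·g(n)/√n`. -/
theorem stmt0 (g : ℕ → ℝ) (hg : ∀ n, 0 < g n) (hg' : Tendsto g atTop atTop)
    (d : ℕ → ℕ) (hd : Tendsto d atTop atTop) (hnd : ∀ n : ℕ, (n : ℝ) ≤ 2 ^ d n) :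
    ∃ C : ℝ, 0 < C ∧
      Tendsto (fun n : ℕ =>
        Measure.pi (fun _ : Fin n => sphereUniform (d n))
          {x : Fin n → Metric.sphere (0 : EuclideanSpace ℝ (Fin (d n))) 1 |
            ∀ B : ℝ, 0 < B → ∀ f : Fin n → EuclideanSpace ℝ (Fin 2),
              (∀ i, ‖f i‖ ≤ B) →
              (1 - C / g n ^ 2) * n ≤
                (Finset.univ.filter (fun i : Fin n => ∃ j : Fin n, j ≠ i ∧
                  0.2 ≤ ‖(x i : EuclideanSpace ℝ (Fin (d n))) - (x j : EuclideanSpace ℝ (Fin (d n)))‖ ∧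
                  ‖f i - f j‖ ≤ 3 * B * g n / Real.sqrt n)).card})
        atTop (nhds 1) := by
  refine ⟨2, by norm_num, ?_⟩
  have hlim : Tendsto (fun n => 1 - ENNReal.ofReal (0.92 ^ d n / 0.03)) atTop (nhds 1) := by
    have h1 : Tendsto (fun n => (0.92 : ℝ) ^ d n / 0.03) atTop (nhds 0) := by
      have := ((tendsto_pow_atTop_nhds_zero_of_lt_one (r := (0.92 : ℝ)) (by norm_num)
        (by norm_num)).comp hd).div_const 0.03
      simpa using this
    have h2 := ENNReal.tendsto_ofReal h1
    have h3 := ENNReal.Tendsto.sub (tendsto_const_nhds (x := (1 : ENNReal)) (f := atTop)) h2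
      (Or.inl ENNReal.one_ne_top)
    simpa using h3
  refine tendsto_of_tendsto_of_tendsto_of_le_of_le' hlim tendsto_const_nhds ?_ ?_
  · filter_upwards [hd.eventually_ge_atTop 1, eventually_ge_atTop 2] with n hdn hn
    have := sphereUniform_isProb (d n) hdn
    have hb := bad_bound (d n) n hdn (hnd n)
    refine (tsub_le_tsub_left hb 1).trans ?_
    rw [tsub_le_iff_right]
    rw [← measure_univ (μ := Measure.pi (fun _ : Fin n => sphereUniform (d n)))]
    refine (measure_mono ?_).trans (measure_union_le _ _)
    intro x _
    by_cases hx : ∃ i j : Fin n, i ≠ j ∧ ‖(x i : EuclideanSpace ℝ (Fin (d n))) - x j‖ < 0.2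
    · exact Or.inr hx
    · left
      intro B hB f hf
      refine determ n hn (g n) (hg n) (fun i j => 0.2 ≤ ‖(x i : EuclideanSpace ℝ (Fin (d n))) - (x j : EuclideanSpace ℝ (Fin (d n)))‖) ?_ B hB f hf _ ?_
      · intro i j hij
        by_contra h
        exact hx ⟨i, j, hij, not_le.1 h⟩
      · intro i hi h
        exact hi (Finset.mem_filter.2 ⟨Finset.mem_univ _, h⟩)
  · filter_upwards [hd.eventually_ge_atTop 1] with n hdn
    have := sphereUniform_isProb (d n) hdn
    exact prob_le_one

end
end

section
/- Let d ≥ 3 and let 0 < r < 2. For any fixed x ∈ S^{d−1}, the normalized surface measure μ_r of the spherical cap {y ∈ S^{d−1} : ‖y − x‖ ≤ r} satisfies μ_r ≤ √(d/(2π)) · (1/(d−1)) · (r/√(1 − r²/4))^{d−1}. -/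
open MeasureTheory

noncomputable section

lemma aux_tail (n : ℕ) (hn : 1 ≤ n) (a : ℝ) :
    ∫⁻ s in Set.Ioi a, ENNReal.ofReal ((Real.sqrt (1 + s ^ 2))⁻¹ ^ (n + 1)) ≤
      ENNReal.ofReal ((2 * (Real.sqrt (1 + a ^ 2) - a)) ^ n / n) := by
  have hn0 : (0 : ℝ) < n := by exact_mod_cast hn
  have hq : ∀ s : ℝ, 0 < Real.sqrt (1 + s ^ 2) := fun s => Real.sqrt_pos.2 (by positivity)
  have hq2 : ∀ s : ℝ, Real.sqrt (1 + s ^ 2) ^ 2 = 1 + s ^ 2 := fun s => Real.sq_sqrt (by positivity)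
  have hu : ∀ s : ℝ, 0 < Real.sqrt (1 + s ^ 2) - s := by
    intro s
    have : s < Real.sqrt (1 + s ^ 2) := Real.lt_sqrt_of_sq_lt (by linarith)
    linarith
  set g : ℝ → ℝ := fun s => (2 * (Real.sqrt (1 + s ^ 2) - s)) ^ n / n with hg
  set g' : ℝ → ℝ := fun s => -((2 * (Real.sqrt (1 + s ^ 2) - s)) ^ n / Real.sqrt (1 + s ^ 2)) with hg'
  have hder : ∀ s ∈ Set.Ici a, HasDerivAt g (g' s) s := by
    intro s _
    have h1 : HasDerivAt (fun s : ℝ => 1 + s ^ 2) (2 * s) s := by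
      simpa using ((hasDerivAt_pow 2 s).const_add 1)
    have h2 := h1.sqrt (by positivity)
    have h3 := (((h2.sub (hasDerivAt_id s)).const_mul 2).pow n).div_const (n : ℝ)
    refine h3.congr_deriv ?_
    obtain ⟨m, rfl⟩ : ∃ m, n = m + 1 := ⟨n - 1, by omega⟩
    simp only [hg', Nat.add_sub_cancel, Pi.sub_apply, id]
    have := (hq s).ne'
    field_simp
    ring
  have hneg : ∀ s ∈ Set.Ioi a, g' s ≤ 0 := by
    intro s _
    have h1 := hu s
    have h2 := hq s
    simp only [hg', neg_nonpos]
    positivity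
  have hlim0 : Filter.Tendsto (fun s : ℝ => 2 * (Real.sqrt (1 + s ^ 2) - s)) Filter.atTop (nhds 0) := by
    have hb : Filter.Tendsto (fun s : ℝ => 2 * s⁻¹) Filter.atTop (nhds 0) := by
      simpa using (tendsto_inv_atTop_zero (𝕜 := ℝ)).const_mul 2
    refine squeeze_zero' (Filter.Eventually.of_forall fun s => by have := hu s; positivity) ?_ hb
    filter_upwards [Filter.eventually_gt_atTop 0] with s hs
    have h : (Real.sqrt (1 + s ^ 2) - s) * s ≤ 1 := by nlinarith [hu s, hq s, hq2 s]
    have : (Real.sqrt (1 + s ^ 2) - s) ≤ s⁻¹ := by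
      rw [← one_div, le_div_iff₀ hs]; exact h
    linarith
  have hlim : Filter.Tendsto g Filter.atTop (nhds 0) := by
    have := (hlim0.pow n).div_const (n : ℝ)
    simpa [zero_pow (by omega : n ≠ 0)] using this
  have hint := integrableOn_Ioi_deriv_of_nonpos' hder hneg hlim
  have hval := integral_Ioi_of_hasDerivAt_of_nonpos' hder hneg hlim
  have e : g a = ∫ s in Set.Ioi a, (-g') s := by
    simp only [Pi.neg_apply]
    rw [integral_neg, hval]; ring
  change _ ≤ ENNReal.ofReal (g a)
  rw [e, ofReal_integral_eq_lintegral_ofReal hint.neg]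
  · refine lintegral_mono fun s => ENNReal.ofReal_le_ofReal ?_
    simp only [hg', Pi.neg_apply, neg_neg]
    have h0 := hq s
    have h1 : (Real.sqrt (1 + s ^ 2))⁻¹ ≤ 2 * (Real.sqrt (1 + s ^ 2) - s) := by
      rw [← one_div, div_le_iff₀ h0]
      nlinarith [sq_nonneg (Real.sqrt (1 + s ^ 2) - s), hq2 s]
    rw [pow_succ, div_eq_mul_inv]
    gcongr
  · filter_upwards [self_mem_ae_restrict measurableSet_Ioi] with s hs
    have := hneg s hs
    simp only [Pi.zero_apply, Pi.neg_apply]; linarith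

lemma aux_ball (n : ℕ) (hn : 1 ≤ n) (ρ : ℝ) (hρ : 0 < ρ) :
    ∫⁻ z in Metric.ball (0 : EuclideanSpace ℝ (Fin n)) ρ, ENNReal.ofReal ‖z‖ =
      ENNReal.ofReal (n / (n + 1) *
        (volume : Measure (EuclideanSpace ℝ (Fin n))).real (Metric.ball 0 1) * ρ ^ (n + 1)) := by
  have : Nonempty (Fin n) := ⟨⟨0, by omega⟩⟩
  have hint : IntegrableOn (fun z : EuclideanSpace ℝ (Fin n) => ‖z‖) (Metric.ball 0 ρ) :=
    (continuous_norm.continuousOn.integrableOn_compact (isCompact_closedBall 0 ρ)).mono_set Metric.ball_subset_closedBall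
  rw [← ofReal_integral_eq_lintegral_ofReal hint (Filter.Eventually.of_forall fun z => norm_nonneg z)]
  congr 1
  rw [← integral_indicator measurableSet_ball]
  have h := integral_fun_norm_addHaar (volume : Measure (EuclideanSpace ℝ (Fin n)))
    ((Set.Iio ρ).indicator (fun y : ℝ => y))
  have e : (Metric.ball (0 : EuclideanSpace ℝ (Fin n)) ρ).indicator (fun z => ‖z‖) =
      fun z => (Set.Iio ρ).indicator (fun y : ℝ => y) ‖z‖ := by
    ext z
    by_cases hz : ‖z‖ < ρ
    · rw [Set.indicator_of_mem (by simpa using hz), Set.indicator_of_mem (by simpa using hz)]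
    · rw [Set.indicator_of_notMem (by simpa using hz), Set.indicator_of_notMem (by simpa using hz)]
  rw [e, h]
  have e2 : ∫ y in Set.Ioi (0:ℝ), y ^ (Module.finrank ℝ (EuclideanSpace ℝ (Fin n)) - 1) •
      (Set.Iio ρ).indicator (fun y : ℝ => y) y = ρ ^ (n + 1) / (n + 1) := by
    have : ∀ y : ℝ, y ^ (Module.finrank ℝ (EuclideanSpace ℝ (Fin n)) - 1) •
      (Set.Iio ρ).indicator (fun y : ℝ => y) y = (Set.Iio ρ).indicator (fun y : ℝ => y ^ n) y := by
      intro y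
      rw [finrank_euclideanSpace, Fintype.card_fin]
      by_cases hy : y ∈ Set.Iio ρ
      · rw [Set.indicator_of_mem hy, Set.indicator_of_mem hy, smul_eq_mul, ← pow_succ]
        congr 1; omega
      · rw [Set.indicator_of_notMem hy, Set.indicator_of_notMem hy, smul_zero]
    simp_rw [this]
    rw [setIntegral_indicator measurableSet_Iio, Set.Ioi_inter_Iio, ← integral_Ioc_eq_integral_Ioo,
      ← intervalIntegral.integral_of_le hρ.le, integral_pow]
    simp
  rw [e2, finrank_euclideanSpace, Fintype.card_fin, nsmul_eq_mul, smul_eq_mul]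
  ring

lemma aux_cone (n : ℕ) (hn : 1 ≤ n) (a : ℝ) :
    volume {p : ℝ × EuclideanSpace ℝ (Fin n) | a * ‖p.2‖ ≤ p.1 ∧ p.1 ^ 2 + ‖p.2‖ ^ 2 < 1} ≤
      ∫⁻ s in Set.Ioi a, ∫⁻ z in Metric.ball (0 : EuclideanSpace ℝ (Fin n)) (Real.sqrt (1 + s ^ 2))⁻¹,
        ENNReal.ofReal ‖z‖ := by
  have : Nonempty (Fin n) := ⟨⟨0, by omega⟩⟩
  have hm : MeasurableSet {p : ℝ × EuclideanSpace ℝ (Fin n) |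
      a * ‖p.2‖ ≤ p.1 ∧ p.1 ^ 2 + ‖p.2‖ ^ 2 < 1} := by
    have h1 : MeasurableSet {p : ℝ × EuclideanSpace ℝ (Fin n) | a * ‖p.2‖ ≤ p.1} :=
      measurableSet_le (by fun_prop) (by fun_prop)
    have h2 : MeasurableSet {p : ℝ × EuclideanSpace ℝ (Fin n) | p.1 ^ 2 + ‖p.2‖ ^ 2 < 1} :=
      measurableSet_lt (by fun_prop) (by fun_prop)
    exact h1.inter h2
  have hm2 : MeasurableSet {p : ℝ × EuclideanSpace ℝ (Fin n) | (1 + p.1 ^ 2) * ‖p.2‖ ^ 2 < 1} :=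
    measurableSet_lt (by fun_prop) (by fun_prop)
  have hball : ∀ (s : ℝ) (z : EuclideanSpace ℝ (Fin n)),
      z ∈ Metric.ball (0 : EuclideanSpace ℝ (Fin n)) (Real.sqrt (1 + s ^ 2))⁻¹ ↔
        (1 + s ^ 2) * ‖z‖ ^ 2 < 1 := by
    intro s z
    have hq : 0 < Real.sqrt (1 + s ^ 2) := Real.sqrt_pos.2 (by positivity)
    have hq2 : Real.sqrt (1 + s ^ 2) ^ 2 = 1 + s ^ 2 := Real.sq_sqrt (by positivity)
    rw [mem_ball_zero_iff, ← one_div, lt_div_iff₀ hq]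
    nth_rewrite 2 [← hq2]
    rw [← mul_pow, sq_lt_one_iff₀ (by positivity), mul_comm]
  rw [Measure.volume_eq_prod, Measure.prod_apply_symm hm,
    Measure.restrict_congr_set (Ioi_ae_eq_Ici (μ := volume) (a := a))]
  have key : ∀ᵐ z : EuclideanSpace ℝ (Fin n), volume ((fun t : ℝ => (t, z)) ⁻¹'
      {p : ℝ × EuclideanSpace ℝ (Fin n) | a * ‖p.2‖ ≤ p.1 ∧ p.1 ^ 2 + ‖p.2‖ ^ 2 < 1}) =
      ∫⁻ s in Set.Ici a, {p : ℝ × EuclideanSpace ℝ (Fin n) | (1 + p.1 ^ 2) * ‖p.2‖ ^ 2 < 1}.indicator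
        (fun p => ENNReal.ofReal ‖p.2‖) (s, z) := by
    have h0 : ∀ᵐ z : EuclideanSpace ℝ (Fin n), z ≠ 0 := by simp [ae_iff]
    filter_upwards [h0] with z hz
    have hz' : 0 < ‖z‖ := norm_pos_iff.2 hz
    set T := (fun t : ℝ => (t, z)) ⁻¹'
      {p : ℝ × EuclideanSpace ℝ (Fin n) | a * ‖p.2‖ ≤ p.1 ∧ p.1 ^ 2 + ‖p.2‖ ^ 2 < 1} with hT
    have h1 := Measure.addHaar_preimage_smul (volume : Measure ℝ) hz'.ne' T
    have h2 : volume T = ENNReal.ofReal ‖z‖ * volume ((‖z‖ • ·) ⁻¹' T) := by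
      rw [h1, ← mul_assoc, ← ENNReal.ofReal_mul hz'.le]
      simp [hz'.ne']
    have h3 : ((‖z‖ • ·) ⁻¹' T) = Set.Ici a ∩ {s : ℝ | (1 + s ^ 2) * ‖z‖ ^ 2 < 1} := by
      ext s
      simp only [hT, Set.mem_preimage, Set.mem_ofPred_eq, Set.mem_inter_iff, Set.mem_Ici, smul_eq_mul]
      rw [mul_comm a, mul_le_mul_iff_right₀ hz']
      have : (‖z‖ * s) ^ 2 + ‖z‖ ^ 2 = (1 + s ^ 2) * ‖z‖ ^ 2 := by ring
      rw [this]
    have hms : MeasurableSet {s : ℝ | (1 + s ^ 2) * ‖z‖ ^ 2 < 1} :=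
      measurableSet_lt (by fun_prop) (by fun_prop)
    have h4 : (fun s : ℝ => {p : ℝ × EuclideanSpace ℝ (Fin n) | (1 + p.1 ^ 2) * ‖p.2‖ ^ 2 < 1}.indicator
        (fun p => ENNReal.ofReal ‖p.2‖) (s, z)) =
        {s : ℝ | (1 + s ^ 2) * ‖z‖ ^ 2 < 1}.indicator (fun _ => ENNReal.ofReal ‖z‖) := by
      ext s
      simp [Set.indicator]
    rw [h2, h3, h4, lintegral_indicator hms, lintegral_const, Measure.restrict_restrict hms,
      Measure.restrict_apply_univ, Set.inter_comm]
  rw [lintegral_congr_ae key, lintegral_lintegral_swap]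
  · refine lintegral_mono fun s => le_of_eq ?_
    rw [← lintegral_indicator measurableSet_ball]
    refine lintegral_congr fun z => ?_
    simp only [Set.indicator, hball, Set.mem_ofPred_eq]
  · refine Measurable.aemeasurable ?_
    refine Measurable.comp (g := {p : ℝ × EuclideanSpace ℝ (Fin n) | (1 + p.1 ^ 2) * ‖p.2‖ ^ 2 < 1}.indicator
        (fun p => ENNReal.ofReal ‖p.2‖)) (f := Prod.swap) ?_ measurable_swap
    exact Measurable.indicator (by fun_prop) hm2

lemma aux_map (n : ℕ) (x : EuclideanSpace ℝ (Fin (n + 1))) (hx : ‖x‖ = 1) :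
    ∃ Ψ : EuclideanSpace ℝ (Fin (n + 1)) → ℝ × EuclideanSpace ℝ (Fin n),
      MeasurePreserving Ψ volume volume ∧ (∀ y, (Ψ y).1 = inner ℝ x y) ∧
      ∀ y, ‖y‖ ^ 2 = (Ψ y).1 ^ 2 + ‖(Ψ y).2‖ ^ 2 := by
  have hv : Orthonormal ℝ (({0} : Set (Fin (n + 1))).domRestrict (fun _ => x)) := by
    refine ⟨fun i => hx, fun i j hij => absurd (Subsingleton.elim i j) hij⟩
  obtain ⟨b, hb⟩ := hv.exists_orthonormalBasis_extension_of_card_eq (by simp)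
  have hb0 : b 0 = x := hb 0 rfl
  refine ⟨fun y => (b.repr y 0, WithLp.toLp 2 (fun i : Fin n => b.repr y i.succ)), ?_, ?_, ?_⟩
  · have h1 := (volume_preserving_piFinSuccAbove (fun _ : Fin (n + 1) => ℝ) 0).comp
      ((PiLp.volume_preserving_ofLp (Fin (n + 1))).comp b.measurePreserving_repr)
    have h2 := (MeasurePreserving.id (volume : Measure ℝ)).prod (PiLp.volume_preserving_toLp (Fin n))
    exact h2.comp h1
  · intro y
    simp [b.repr_apply_apply, hb0]
  · intro y
    rw [← b.repr.norm_map y, EuclideanSpace.norm_sq_eq, EuclideanSpace.norm_sq_eq, Fin.sum_univ_succ]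
    simp

lemma aux_gamma (n : ℕ) (hn : 1 ≤ n) :
    (volume : Measure (EuclideanSpace ℝ (Fin n))).real (Metric.ball 0 1) ≤
      Real.sqrt ((n + 1 : ℕ) / (2 * Real.pi)) * (1 / n) * ((n + 1) *
      (volume : Measure (EuclideanSpace ℝ (Fin (n + 1)))).real (Metric.ball 0 1)) := by
  have : Nonempty (Fin n) := ⟨⟨0, by omega⟩⟩
  have hn0 : (0 : ℝ) < n := by exact_mod_cast hn
  simp only [Measure.real, EuclideanSpace.volume_ball, Fintype.card_fin, ENNReal.ofReal_one, one_pow, one_mul]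
  have G1 : 0 < Real.Gamma ((n : ℝ) / 2) := Real.Gamma_pos_of_pos (by positivity)
  have G2 : 0 < Real.Gamma (((n : ℝ) + 1) / 2) := Real.Gamma_pos_of_pos (by positivity)
  have E1 : Real.Gamma ((n : ℝ) / 2 + 1) = n / 2 * Real.Gamma (n / 2) := Real.Gamma_add_one (by positivity)
  have E2 : Real.Gamma (((n + 1 : ℕ) : ℝ) / 2 + 1) = (n + 1) / 2 * Real.Gamma ((n + 1) / 2) := by
    push_cast
    exact Real.Gamma_add_one (by positivity)
  rw [E1, E2, ENNReal.toReal_ofReal (by positivity), ENNReal.toReal_ofReal (by positivity)]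
  have hG : Real.Gamma (((n : ℝ) + 1) / 2) ≤ Real.Gamma (n / 2) * Real.sqrt (n / 2) := by
    have := Real.Gamma_mul_add_mul_le_rpow_Gamma_mul_rpow_Gamma (s := (n : ℝ) / 2) (t := (n : ℝ) / 2 + 1)
      (a := 1 / 2) (b := 1 / 2) (by positivity) (by positivity) (by norm_num) (by norm_num) (by norm_num)
    rw [E1, ← Real.sqrt_eq_rpow, ← Real.sqrt_eq_rpow, ← Real.sqrt_mul G1.le] at this
    have e : Real.Gamma ((n : ℝ) / 2) * (n / 2 * Real.Gamma (n / 2)) = Real.Gamma (n / 2) ^ 2 * (n / 2) := by ring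
    rw [e, Real.sqrt_mul (by positivity), Real.sqrt_sq G1.le] at this
    convert this using 2
    ring
  have hsq : Real.sqrt (n / 2) ≤ Real.sqrt ((n + 1 : ℕ) / (2 * Real.pi)) * Real.sqrt Real.pi := by
    rw [← Real.sqrt_mul (by positivity)]
    apply Real.sqrt_le_sqrt
    push_cast
    have := Real.pi_pos
    field_simp
    linarith
  have hG' := hG.trans (mul_le_mul_of_nonneg_left hsq G1.le)
  have hp : 0 < Real.sqrt Real.pi := Real.sqrt_pos.2 Real.pi_pos
  set S := Real.sqrt ((n + 1 : ℕ) / (2 * Real.pi))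
  set P := Real.sqrt Real.pi
  rw [pow_succ]
  have : S * (1 / n) * ((n + 1) * (P ^ n * P / (((n:ℝ) + 1) / 2 * Real.Gamma ((n + 1) / 2)))) =
    (P ^ n / (n / 2)) * (S * P / Real.Gamma ((n + 1) / 2)) := by
    field_simp
  rw [this, ← div_div, div_eq_mul_inv _ (Real.Gamma (n / 2))]
  gcongr
  rw [← one_div, div_le_div_iff₀ G1 G2]
  linarith

lemma aux_alg (t ρ N c σ : ℝ) (hρ : 0 ≤ ρ) (hN : 0 < N) (hσ : 0 < σ) (h1 : c ^ 2 + σ ^ 2 = 1)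
    (h2 : N ^ 2 = t ^ 2 + ρ ^ 2) (h3 : c * N ≤ t) : c / σ * ρ ≤ t := by
  rw [div_mul_eq_mul_div, div_le_iff₀ hσ]
  by_contra! h
  rcases le_or_gt 0 t with ht | ht
  · have hc : 0 < c := by
      by_contra! hc
      nlinarith [mul_nonneg ht hσ.le, mul_nonneg hρ (neg_nonneg.2 hc)]
    have e1 : (c * N) ^ 2 ≤ t ^ 2 := pow_le_pow_left₀ (by positivity) h3 2
    have e2 : (t * σ) ^ 2 < (c * ρ) ^ 2 := pow_lt_pow_left₀ h (by positivity) (by norm_num)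
    have e3 : (c * N) ^ 2 = c ^ 2 * t ^ 2 + (c * ρ) ^ 2 := by rw [mul_pow, h2]; ring
    have e4 : t ^ 2 = c ^ 2 * t ^ 2 + (t * σ) ^ 2 := by linear_combination (-t ^ 2) * h1
    linarith
  · have hc : c < 0 := by
      by_contra! hc
      nlinarith [mul_nonneg hc hN.le]
    have e1 : (-t) ^ 2 ≤ (-(c * N)) ^ 2 := pow_le_pow_left₀ (by linarith) (by linarith) 2
    have e2 : (-(c * ρ)) ^ 2 < (-(t * σ)) ^ 2 :=
      pow_lt_pow_left₀ (by linarith) (by nlinarith [mul_nonneg (neg_nonneg.2 hc.le) hρ]) (by norm_num)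
    have e3 : (-(c * N)) ^ 2 = c ^ 2 * t ^ 2 + (-(c * ρ)) ^ 2 := by
      rw [neg_sq, mul_pow, h2]; ring
    have e4 : (-t) ^ 2 = c ^ 2 * t ^ 2 + (-(t * σ)) ^ 2 := by linear_combination (-t ^ 2) * h1
    linarith

lemma aux_vol (n : ℕ) (hn : 1 ≤ n) (a : ℝ) :
    volume {p : ℝ × EuclideanSpace ℝ (Fin n) | a * ‖p.2‖ ≤ p.1 ∧ p.1 ^ 2 + ‖p.2‖ ^ 2 < 1} ≤
      ENNReal.ofReal ((volume : Measure (EuclideanSpace ℝ (Fin n))).real (Metric.ball 0 1) / (n + 1) *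
        (2 * (Real.sqrt (1 + a ^ 2) - a)) ^ n) := by
  have hn0 : (0 : ℝ) < n := by exact_mod_cast hn
  refine (aux_cone n hn a).trans ?_
  have h : ∀ s : ℝ, ∫⁻ z in Metric.ball (0 : EuclideanSpace ℝ (Fin n)) (Real.sqrt (1 + s ^ 2))⁻¹,
        ENNReal.ofReal ‖z‖ = ENNReal.ofReal (n / (n + 1) *
        (volume : Measure (EuclideanSpace ℝ (Fin n))).real (Metric.ball 0 1)) *
        ENNReal.ofReal ((Real.sqrt (1 + s ^ 2))⁻¹ ^ (n + 1)) := by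
    intro s
    rw [aux_ball n hn _ (inv_pos.2 (Real.sqrt_pos.2 (by positivity))), ENNReal.ofReal_mul (by positivity)]
  simp_rw [h]
  rw [lintegral_const_mul' _ _ ENNReal.ofReal_ne_top]
  refine (mul_le_mul_right (aux_tail n hn a) _).trans ?_
  rw [← ENNReal.ofReal_mul (by positivity)]
  refine ENNReal.ofReal_le_ofReal (le_of_eq ?_)
  field_simp

/-- for `d ≥ 3` and `0 < r < 2`, the normalized surface measure of the spherical
cap of (Euclidean) radius `r` around any `x ∈ S^{d-1}` is at most
`√(d/(2π)) · (1/(d-1)) · (r/√(1 - r²/4))^{d-1}`. -/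
theorem stmt2 (d : ℕ) (hd : 3 ≤ d) (r : ℝ) (hr : 0 < r) (hr2 : r < 2)
    (x : Metric.sphere (0 : EuclideanSpace ℝ (Fin d)) 1) :
    sphereUniform d {y : Metric.sphere (0 : EuclideanSpace ℝ (Fin d)) 1 |
        ‖(y : EuclideanSpace ℝ (Fin d)) - (x : EuclideanSpace ℝ (Fin d))‖ ≤ r} ≤
      ENNReal.ofReal (Real.sqrt (d / (2 * Real.pi)) * (1 / (d - 1 : ℝ)) *
        (r / Real.sqrt (1 - r ^ 2 / 4)) ^ (d - 1)) := by
  obtain ⟨n, rfl⟩ : ∃ n, d = n + 1 := ⟨d - 1, by omega⟩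
  have hn : 1 ≤ n := by omega
  have hn0 : (0 : ℝ) < n := by exact_mod_cast hn
  have hx : ‖(x : EuclideanSpace ℝ (Fin (n + 1)))‖ = 1 := by simp
  obtain ⟨Ψ, hΨ, hΨ1, hΨ2⟩ := aux_map n x hx
  set q := Real.sqrt (1 - r ^ 2 / 4) with hq
  have hqpos : 0 < q := Real.sqrt_pos.2 (by nlinarith)
  have hq2 : q ^ 2 = 1 - r ^ 2 / 4 := Real.sq_sqrt (by nlinarith)
  set c := 1 - r ^ 2 / 2 with hc
  set a := c / (r * q) with ha
  have hσ : 0 < r * q := by positivity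
  have hcs : c ^ 2 + (r * q) ^ 2 = 1 := by rw [mul_pow, hq2, hc]; ring
  have hR : 2 * (Real.sqrt (1 + a ^ 2) - a) = r / q := by
    have : 1 + a ^ 2 = (1 / (r * q)) ^ 2 := by
      rw [ha, div_pow, div_pow, one_pow]
      field_simp
      linarith
    rw [this, Real.sqrt_sq (by positivity), ha, hc]
    field_simp
    ring
  set S := {p : ℝ × EuclideanSpace ℝ (Fin n) | a * ‖p.2‖ ≤ p.1 ∧ p.1 ^ 2 + ‖p.2‖ ^ 2 < 1} with hS
  have hmS : MeasurableSet S := by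
    have h1 : MeasurableSet {p : ℝ × EuclideanSpace ℝ (Fin n) | a * ‖p.2‖ ≤ p.1} :=
      measurableSet_le (by fun_prop) (by fun_prop)
    have h2 : MeasurableSet {p : ℝ × EuclideanSpace ℝ (Fin n) | p.1 ^ 2 + ‖p.2‖ ^ 2 < 1} :=
      measurableSet_lt (by fun_prop) (by fun_prop)
    exact h1.inter h2
  set cap := {y : Metric.sphere (0 : EuclideanSpace ℝ (Fin (n + 1))) 1 |
        ‖(y : EuclideanSpace ℝ (Fin (n + 1))) - (x : EuclideanSpace ℝ (Fin (n + 1)))‖ ≤ r} with hcap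
  have hmcap : MeasurableSet cap := measurableSet_le (by fun_prop) (by fun_prop)
  open scoped Pointwise in
  have hsub : Set.Ioo (0 : ℝ) 1 • ((↑) '' cap : Set (EuclideanSpace ℝ (Fin (n + 1)))) ⊆ Ψ ⁻¹' S := by
    rintro _ ⟨k, hk, _, ⟨y, hy, rfl⟩, rfl⟩
    have hy1 : ‖(y : EuclideanSpace ℝ (Fin (n + 1)))‖ = 1 := by simp
    have hN : ‖k • (y : EuclideanSpace ℝ (Fin (n + 1)))‖ = k := by
      rw [norm_smul, hy1, mul_one, Real.norm_of_nonneg hk.1.le]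
    have hin : c ≤ inner ℝ (x : EuclideanSpace ℝ (Fin (n + 1))) y := by
      have h1 := norm_sub_sq_real (y : EuclideanSpace ℝ (Fin (n + 1))) x
      have h2 : ‖(y : EuclideanSpace ℝ (Fin (n + 1))) - x‖ ^ 2 ≤ r ^ 2 :=
        pow_le_pow_left₀ (norm_nonneg _) hy 2
      rw [hx, hy1, real_inner_comm] at h1
      rw [hc]
      linarith
    have h2 := hΨ2 (k • (y : EuclideanSpace ℝ (Fin (n + 1))))
    rw [hN] at h2
    refine ⟨?_, ?_⟩
    · refine aux_alg _ _ k c (r * q) (norm_nonneg _) hk.1 hσ hcs h2 ?_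
      rw [hΨ1, inner_smul_right, mul_comm]
      exact mul_le_mul_of_nonneg_left hin hk.1.le
    · change (Ψ _).1 ^ 2 + ‖(Ψ _).2‖ ^ 2 < 1
      rw [← h2]
      nlinarith [hk.1, hk.2]
  set ω := (volume : Measure (EuclideanSpace ℝ (Fin n))).real (Metric.ball 0 1) with hω
  set ω' := (volume : Measure (EuclideanSpace ℝ (Fin (n + 1)))).real (Metric.ball 0 1) with hω'
  have hω'pos : 0 < ω' :=
    ENNReal.toReal_pos (Metric.measure_ball_pos _ _ one_pos).ne' measure_ball_lt_top.ne
  open scoped Pointwise in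
  have hvol : volume (Set.Ioo (0 : ℝ) 1 • ((↑) '' cap : Set (EuclideanSpace ℝ (Fin (n + 1))))) ≤
      ENNReal.ofReal (ω / (n + 1) * (r / q) ^ n) := by
    refine (measure_mono hsub).trans ?_
    rw [hΨ.measure_preimage hmS.nullMeasurableSet, ← hR]
    exact aux_vol n hn a
  have huniv : (volume : Measure (EuclideanSpace ℝ (Fin (n + 1)))).toSphere Set.univ =
      ENNReal.ofReal ((n + 1) * ω') := by
    rw [Measure.toSphere_apply_univ, finrank_euclideanSpace, Fintype.card_fin,
      ENNReal.ofReal_mul (by positivity), hω', ofReal_measureReal measure_ball_lt_top.ne]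
    congr 1
    rw [← ENNReal.ofReal_natCast]
    push_cast
    rfl
  have hcapm : (volume : Measure (EuclideanSpace ℝ (Fin (n + 1)))).toSphere cap ≤
      ENNReal.ofReal (ω * (r / q) ^ n) := by
    rw [Measure.toSphere_apply' _ hmcap, finrank_euclideanSpace, Fintype.card_fin,
      ← ENNReal.ofReal_natCast]
    refine (mul_le_mul_right hvol _).trans ?_
    rw [← ENNReal.ofReal_mul (by positivity)]
    refine ENNReal.ofReal_le_ofReal (le_of_eq ?_)
    push_cast
    field_simp
  rw [sphereUniform, Measure.smul_apply, smul_eq_mul, huniv, ← ENNReal.ofReal_inv_of_pos (by positivity)]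
  refine (mul_le_mul_right hcapm _).trans ?_
  rw [← ENNReal.ofReal_mul (by positivity)]
  refine ENNReal.ofReal_le_ofReal ?_
  have hg := aux_gamma n hn
  rw [← hω, ← hω'] at hg
  have hn1 : ((n + 1 : ℕ) : ℝ) - 1 = n := by push_cast; ring
  rw [hn1, Nat.add_sub_cancel, inv_mul_le_iff₀ (by positivity)]
  refine (mul_le_mul_of_nonneg_right hg (by positivity : 0 ≤ (r / q) ^ n)).trans (le_of_eq ?_)
  ring

end
end

section
/- Fix σ > 0. For each n, let the dataset be X = {e_1, …, e_n, 2e_{n+1}, …, 2e_{2n}} ⊂ ℝ^{2n}, where e_1, …, e_{2n} is the standard orthonormal basis, and form the t-SNE input distribution P on unordered pairs of the 2n points using all bandwidths σ_i = σ. Then there exists a constant c > 0 such that for all sufficiently large n and every choice of embedding points y_1, …, y_{2n} ∈ ℝ², the t-SNE objective satisfies D(P‖Q) ≥ c. -/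
open MeasureTheory Filter Finset

noncomputable section

/-- t-SNE conditional probability `p_{j|i}`. -/
def pcond {N d : ℕ} (x : Fin N → EuclideanSpace ℝ (Fin d)) (σ : Fin N → ℝ) (i j : Fin N) : ℝ :=
  Real.exp (-‖x i - x j‖ ^ 2 / (2 * σ i ^ 2)) /
    ∑ k ∈ Finset.univ.erase i, Real.exp (-‖x i - x k‖ ^ 2 / (2 * σ i ^ 2))

/-- t-SNE pair probability `p_{ij} = (p_{i|j} + p_{j|i})/N`. -/
def pmat {N d : ℕ} (x : Fin N → EuclideanSpace ℝ (Fin d)) (σ : Fin N → ℝ) (i j : Fin N) : ℝ :=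
  (pcond x σ j i + pcond x σ i j) / N

/-- Normalization constant `Z` of the t-SNE output similarities. -/
def Zsum {N s : ℕ} (y : Fin N → EuclideanSpace ℝ (Fin s)) : ℝ :=
  ∑ i, ∑ j, if i < j then (1 + ‖y i - y j‖ ^ 2)⁻¹ else 0

/-- t-SNE output pair probability `q_{ij}`. -/
def qmat {N s : ℕ} (y : Fin N → EuclideanSpace ℝ (Fin s)) (i j : Fin N) : ℝ :=
  (1 + ‖y i - y j‖ ^ 2)⁻¹ / Zsum y

/-- KL divergence between two arrays indexed by unordered pairs `{i,j}`, `i < j`. -/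
def KLpairs {N : ℕ} (p q : Fin N → Fin N → ℝ) : ℝ :=
  ∑ i, ∑ j, if i < j then p i j * Real.log (p i j / q i j) else 0

/-- The doubled orthogonal frame `{e_1, …, e_n, 2e_{n+1}, …, 2e_{2n}} ⊂ ℝ^{2n}`. -/
def doubledFrame (n : ℕ) : Fin (2 * n) → EuclideanSpace ℝ (Fin (2 * n)) :=
  fun i => (if (i : ℕ) < n then (1 : ℝ) else 2) • EuclideanSpace.single i (1 : ℝ)

lemma sum_symm {N : ℕ} (f : Fin N → Fin N → ℝ) (hf : ∀ i j, f i j = f j i) :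
    ∑ i, ∑ j, f i j = ∑ i, f i i + 2 * ∑ i, ∑ j, (if i < j then f i j else 0) := by
  have h1 : ∀ i j, f i j = (if i = j then f i i else 0) + (if i < j then f i j else 0)
      + (if j < i then f j i else 0) := by
    intro i j
    rcases lt_trichotomy i j with h | h | h
    · simp [h, h.ne, h.not_gt]
    · subst h; simp
    · simp [h, h.ne', h.not_gt, hf i j]
  have h2 : ∑ i, ∑ j, (if j < i then f j i else 0) = ∑ i, ∑ j, (if i < j then f i j else 0) :=
    Finset.sum_comm
  calc ∑ i, ∑ j, f i j = ∑ i, ∑ j, ((if i = j then f i i else 0) + (if i < j then f i j else 0)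
      + (if j < i then f j i else 0)) :=
        Finset.sum_congr rfl fun i _ => Finset.sum_congr rfl fun j _ => h1 i j
    _ = _ := by
      simp only [Finset.sum_add_distrib]
      rw [h2]; simp; ring

lemma sum_half (n : ℕ) (x y : ℝ) : ∑ i : Fin (2 * n), (if (i : ℕ) < n then x else y) = n * x + n * y := by
  rw [Fin.sum_univ_eq_sum_range (fun i => if i < n then x else y), two_mul, Finset.sum_range_add]
  rw [Finset.sum_congr rfl (g := fun _ => x) (fun i hi => by simp at hi; simp [hi])]
  simp

/-- Lipschitz bound for `exp (-η/x)`. -/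
lemma lip_aux (η x y : ℝ) (hη : 0 < η) (hy : 0 < y) (hxy : y ≤ x) :
    |Real.exp (-(η / x)) - Real.exp (-(η / y))| ≤ 4 / η * |x - y| := by
  have hx : 0 < x := lt_of_lt_of_le hy hxy
  have hdiv : η / x ≤ η / y := by gcongr
  rw [abs_of_nonneg (sub_nonneg.2 hxy), abs_of_nonneg (sub_nonneg.2 (Real.exp_le_exp.2 (by linarith)))]
  set t := η / x with ht
  have htp : 0 < t := by positivity
  by_cases h : y < x / 2
  · have h1 : Real.exp (-t) ≤ 1 / t := by
      rw [Real.exp_neg, ← one_div]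
      apply one_div_le_one_div_of_le htp
      linarith [Real.add_one_le_exp t]
    have h2 : 1 / t = x / η := by rw [ht]; field_simp
    have h3 : x / η ≤ 4 / η * (x - y) := by
      rw [div_mul_eq_mul_div]; gcongr; linarith
    have := Real.exp_pos (-(η / y))
    linarith
  · push Not at h
    have h0 : Real.exp (-(η / y)) = Real.exp (-t) * Real.exp (-(η / y - t)) := by
      rw [← Real.exp_add]; congr 1; ring
    have h1 : 1 - (η / y - t) ≤ Real.exp (-(η / y - t)) := by
      linarith [Real.add_one_le_exp (-(η / y - t))]
    have h2 : Real.exp (-t) ≤ 2 / t ^ 2 := by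
      rw [Real.exp_neg, ← one_div]
      have := Real.quadratic_le_exp_of_nonneg htp.le
      rw [div_le_div_iff₀ (Real.exp_pos _) (by positivity)]
      linarith
    have h3 : η / y - t = η * (x - y) / (x * y) := by rw [ht]; field_simp
    have h3' : 0 ≤ η / y - t := by linarith
    calc _ = Real.exp (-t) * (1 - Real.exp (-(η / y - t))) := by rw [h0]; ring
      _ ≤ Real.exp (-t) * (η / y - t) :=
        mul_le_mul_of_nonneg_left (by linarith) (Real.exp_pos _).le
      _ ≤ 2 / t ^ 2 * (η / y - t) := by gcongr
      _ = 2 * x * (x - y) / (η * y) := by rw [h3, ht]; field_simp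
      _ ≤ 4 / η * (x - y) := by
        rw [div_mul_eq_mul_div, div_le_div_iff₀ (by positivity) hη]
        nlinarith [mul_nonneg (mul_nonneg (sub_nonneg.2 hxy) hη.le) (by linarith : 0 ≤ 2 * y - x)]

lemma lip (η x y : ℝ) (hη : 0 < η) (hx : 0 < x) (hy : 0 < y) :
    |Real.exp (-(η / x)) - Real.exp (-(η / y))| ≤ 4 / η * |x - y| := by
  rcases le_total y x with h | h
  · exact lip_aux η x y hη hy h
  · rw [abs_sub_comm, abs_sub_comm x y]; exact lip_aux η y x hη hx h

lemma kl_pt (p q ε : ℝ) (hp : 0 < p) (hq : 0 < q) (hε : 0 < ε) :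
    |p - q| ≤ (p * Real.log (p / q) - p + q) / (2 * ε) + ε * (p + q) := by
  obtain ⟨a, ha, rfl⟩ : ∃ a, 0 < a ∧ p = a ^ 2 := ⟨√p, by positivity, (Real.sq_sqrt hp.le).symm⟩
  obtain ⟨b, hb, rfl⟩ : ∃ b, 0 < b ∧ q = b ^ 2 := ⟨√q, by positivity, (Real.sq_sqrt hq.le).symm⟩
  have h1 : (a - b) ^ 2 ≤ a ^ 2 * Real.log (a ^ 2 / b ^ 2) - a ^ 2 + b ^ 2 := by
    have : Real.log (a ^ 2 / b ^ 2) = - (2 * Real.log (b / a)) := by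
      rw [← div_pow, Real.log_pow, Real.log_div ha.ne' hb.ne', Real.log_div hb.ne' ha.ne']; push_cast; ring
    rw [this]
    have h2 := Real.log_le_sub_one_of_pos (div_pos hb ha)
    have h3 : a ^ 2 * Real.log (b / a) ≤ a ^ 2 * (b / a - 1) := by gcongr
    have h4 : a ^ 2 * (b / a - 1) = a * b - a ^ 2 := by field_simp
    nlinarith
  have h2 : |a ^ 2 - b ^ 2| = |a - b| * (a + b) := by
    rw [← abs_of_pos (add_pos ha hb), ← abs_mul]; congr 1; ring
  have h3 : |a - b| * (a + b) ≤ (a - b) ^ 2 / (2 * ε) + ε * (a ^ 2 + b ^ 2) := by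
    rw [← sq_abs (a - b)]
    set d := |a - b|
    have : d * (a + b) ≤ d ^ 2 / (2 * ε) + ε * (a + b) ^ 2 / 2 := by
      have : d ^ 2 / (2 * ε) + ε * (a + b) ^ 2 / 2 - d * (a + b) = (d - ε * (a + b)) ^ 2 / (2 * ε) := by
        field_simp; ring
      have h5 : 0 ≤ (d - ε * (a + b)) ^ 2 / (2 * ε) := by positivity
      linarith
    nlinarith [mul_nonneg hε.le (sq_nonneg (a - b))]
  rw [h2]
  refine h3.trans ?_
  gcongr

lemma integral_cos_gauss (t : EuclideanSpace ℝ (Fin 2)) :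
    ∫ x, Real.cos (inner ℝ x t) ∂(ProbabilityTheory.stdGaussian (EuclideanSpace ℝ (Fin 2)))
      = Real.exp (-‖t‖ ^ 2 / 2) := by
  have h := ProbabilityTheory.charFun_stdGaussian t
  rw [charFun_apply] at h
  have h2 : Integrable (fun x : EuclideanSpace ℝ (Fin 2) => Complex.exp ((inner ℝ x t : ℝ) * Complex.I))
      (ProbabilityTheory.stdGaussian (EuclideanSpace ℝ (Fin 2))) := by
    refine Integrable.of_bound (C := 1) (by fun_prop) (ae_of_all _ fun x => ?_)
    rw [Complex.norm_exp_ofReal_mul_I]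
  have h3 := congrArg Complex.re h
  have h4 := integral_re h2
  simp only [RCLike.re_to_complex, Complex.exp_ofReal_mul_I_re] at h4
  rw [h4, h3]
  rw [← Complex.ofReal_pow, ← Complex.exp_ofReal_re]
  congr 2
  push_cast
  ring

lemma gauss_pd {N : ℕ} (w : Fin N → ℝ) (y : Fin N → EuclideanSpace ℝ (Fin 2)) (s : ℝ) (hs : 0 ≤ s) :
    0 ≤ ∑ i, ∑ j, w i * w j * Real.exp (-(s * ‖y i - y j‖ ^ 2)) := by
  set μ := ProbabilityTheory.stdGaussian (EuclideanSpace ℝ (Fin 2))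
  set z : Fin N → EuclideanSpace ℝ (Fin 2) := fun i => √(2 * s) • y i with hz
  have h1 : ∀ i j, Real.exp (-(s * ‖y i - y j‖ ^ 2)) = ∫ x, Real.cos (inner ℝ x (z i - z j)) ∂μ := by
    intro i j
    rw [integral_cos_gauss]
    congr 1
    rw [hz]
    simp only
    rw [← smul_sub, norm_smul, mul_pow, Real.norm_eq_abs, sq_abs, Real.sq_sqrt (by positivity)]
    ring
  have hint : ∀ t, Integrable (fun x : EuclideanSpace ℝ (Fin 2) => Real.cos (inner ℝ x t)) μ := by
    intro t
    refine Integrable.of_bound (C := 1) (by fun_prop) (ae_of_all _ fun x => ?_)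
    exact Real.abs_cos_le_one _
  have h2 : ∑ i, ∑ j, w i * w j * Real.exp (-(s * ‖y i - y j‖ ^ 2))
      = ∫ x, ∑ i, ∑ j, w i * w j * Real.cos (inner ℝ x (z i - z j)) ∂μ := by
    rw [integral_finsetSum _ (fun i _ => integrable_finsetSum _ fun j _ => (hint _).const_mul _)]
    refine Finset.sum_congr rfl fun i _ => ?_
    rw [integral_finsetSum _ (fun j _ => (hint _).const_mul _)]
    refine Finset.sum_congr rfl fun j _ => ?_
    rw [integral_const_mul, h1]
  rw [h2]
  refine integral_nonneg fun x => ?_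
  have h3 : ∑ i, ∑ j, w i * w j * Real.cos (inner ℝ x (z i - z j))
      = (∑ i, w i * Real.cos (inner ℝ x (z i))) ^ 2 + (∑ i, w i * Real.sin (inner ℝ x (z i))) ^ 2 := by
    rw [sq, sq, Finset.sum_mul_sum, Finset.sum_mul_sum, ← Finset.sum_add_distrib]
    refine Finset.sum_congr rfl fun i _ => ?_
    rw [← Finset.sum_add_distrib]
    refine Finset.sum_congr rfl fun j _ => ?_
    rw [inner_sub_right, Real.cos_sub]
    ring
  simp only [Pi.zero_apply]
  rw [h3]
  positivity

lemma exp_quad (t : ℝ) (ht : 0 ≤ t) : Real.exp (-t) ≤ 1 - t + t ^ 2 := by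
  have h1 : Real.exp (-t) ≤ 1 / (1 + t) := by
    rw [Real.exp_neg, ← one_div]
    apply one_div_le_one_div_of_le (by positivity)
    linarith [Real.add_one_le_exp t]
  refine h1.trans ?_
  rw [div_le_iff₀ (by positivity)]
  nlinarith [pow_nonneg ht 3]

/-- The weights. -/
def gw (a b : ℝ) (n : ℕ) (i : Fin (2 * n)) : ℝ := if (i : ℕ) < n then a else b

/-- Scaled pair probabilities `2 n² p`. -/
def xs (a b : ℝ) (n : ℕ) (i j : Fin (2 * n)) : ℝ :=
  n * (gw a b n i / (n * a + n * b - gw a b n j) + gw a b n j / (n * a + n * b - gw a b n i))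

lemma kappa (a b η δ M : ℝ) (n : ℕ) (hb : 0 < b) (hab : b < a) (hn : 2 ≤ n) (hη : 0 < η)
    (hδ : δ = (1 - b / a) ^ 2 / (4 * (b / a)))
    (hM : M = ((1 + b / a) ^ 2 + (1 + a / b) ^ 2) / 4) (hnδ : 1 ≤ n * δ) (hηM : η * M ≤ δ / 2) :
    Real.exp (-(η / (n * (a / (n * a + n * b - a) + a / (n * a + n * b - a)))))
    + Real.exp (-(η / (n * (b / (n * a + n * b - b) + b / (n * a + n * b - b)))))
    - 2 * Real.exp (-(η / (n * (a / (n * a + n * b - b) + b / (n * a + n * b - a)))))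
      ≤ -(η * δ / 2) := by
  have ha : 0 < a := hb.trans hab
  have hn' : (2 : ℝ) ≤ n := by exact_mod_cast hn
  have hn0 : (0 : ℝ) < n := by linarith
  have hGa : 0 < n * a + n * b - a := by nlinarith
  have hGb : 0 < n * a + n * b - b := by nlinarith
  have hnab : 0 < n * a + n * b := by positivity
  have e1 : η / (n * (a / (n * a + n * b - a) + a / (n * a + n * b - a)))
      = η * ((1 + b / a) / 2 - 1 / (2 * n)) := by field_simp; ring
  have e2 : η / (n * (b / (n * a + n * b - b) + b / (n * a + n * b - b)))
      = η * ((1 + a / b) / 2 - 1 / (2 * n)) := by field_simp; ring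
  have e3 : 1 ≤ n * (a / (n * a + n * b - b) + b / (n * a + n * b - a)) := by
    have h1 : a / (n * a + n * b) ≤ a / (n * a + n * b - b) := by gcongr; linarith
    have h2 : b / (n * a + n * b) ≤ b / (n * a + n * b - a) := by gcongr; linarith
    have h3 : 1 = n * (a / (n * a + n * b) + b / (n * a + n * b)) := by field_simp
    rw [h3]; gcongr
  have e4 : η / (n * (a / (n * a + n * b - b) + b / (n * a + n * b - a))) ≤ η :=
    div_le_self hη.le e3
  have e5 : 1 - η ≤ Real.exp (-(η / (n * (a / (n * a + n * b - b) + b / (n * a + n * b - a))))) :=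
    by linarith [Real.add_one_le_exp
        (-(η / (n * (a / (n * a + n * b - b) + b / (n * a + n * b - a)))))]
  rw [e1, e2]
  have hk : 1 / (2 * (n : ℝ)) ≤ 1 / 4 := by
    apply one_div_le_one_div_of_le <;> linarith
  have hk0 : 0 < 1 / (2 * (n : ℝ)) := by positivity
  have hkδ : 2 * (1 / (2 * (n : ℝ))) ≤ δ := by
    have : 2 * (1 / (2 * (n : ℝ))) = 1 / n := by field_simp
    rw [this, div_le_iff₀ hn0]; linarith
  set k := 1 / (2 * (n : ℝ))
  have hba : 0 < b / a := by positivity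
  have hab' : 0 < a / b := by positivity
  have hsum : (1 + b / a) / 2 + (1 + a / b) / 2 = 2 + 2 * δ := by rw [hδ]; field_simp; ring
  set u0 := (1 + b / a) / 2 with hu0
  set v0 := (1 + a / b) / 2 with hv0
  have hu : 0 ≤ u0 - k := by rw [hu0]; linarith
  have hv : 0 ≤ v0 - k := by rw [hv0]; linarith
  have f1 := exp_quad (η * (u0 - k)) (by positivity)
  have f2 := exp_quad (η * (v0 - k)) (by positivity)
  have hM' : M = u0 ^ 2 + v0 ^ 2 := by rw [hM, hu0, hv0]; ring
  have f3 : (η * (u0 - k)) ^ 2 ≤ η ^ 2 * u0 ^ 2 := by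
    rw [mul_pow]; gcongr; linarith
  have f4 : (η * (v0 - k)) ^ 2 ≤ η ^ 2 * v0 ^ 2 := by
    rw [mul_pow]; gcongr; linarith
  have f5 : η ^ 2 * u0 ^ 2 + η ^ 2 * v0 ^ 2 ≤ η * (δ / 2) := by
    calc _ = η * (η * M) := by rw [hM']; ring
      _ ≤ _ := by gcongr
  have f6 : η * (2 + δ) ≤ η * (u0 - k) + η * (v0 - k) := by
    rw [← mul_add]; exact mul_le_mul_of_nonneg_left (by linarith) hη.le
  linarith

lemma gw_pos (a b : ℝ) (n : ℕ) (ha : 0 < a) (hb : 0 < b) (i) : 0 < gw a b n i := by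
  unfold gw; split_ifs <;> assumption

lemma G_pos (a b : ℝ) (n : ℕ) (hn : 2 ≤ n) (ha : 0 < a) (hb : 0 < b) (i) :
    0 < n * a + n * b - gw a b n i := by
  have hn' : (2 : ℝ) ≤ n := by exact_mod_cast hn
  unfold gw; split_ifs <;> nlinarith

lemma xs_pos (a b : ℝ) (n : ℕ) (hn : 2 ≤ n) (ha : 0 < a) (hb : 0 < b) (i j) :
    0 < xs a b n i j := by
  have hn' : (0 : ℝ) < n := by exact_mod_cast (by omega : 0 < n)
  have := gw_pos a b n ha hb i
  have := gw_pos a b n ha hb j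
  have := G_pos a b n hn ha hb i
  have := G_pos a b n hn ha hb j
  unfold xs; positivity

lemma xs_symm (a b : ℝ) (n : ℕ) (i j) : xs a b n i j = xs a b n j i := by
  unfold xs; ring

lemma sum_gw (a b : ℝ) (n : ℕ) : ∑ i, gw a b n i = n * a + n * b := sum_half n a b

lemma sum_xs (a b : ℝ) (n : ℕ) (hn : 2 ≤ n) (ha : 0 < a) (hb : 0 < b) :
    ∑ i, ∑ j, (if i < j then xs a b n i j else 0) = 2 * (n : ℝ) ^ 2 := by
  have h := sum_symm (xs a b n) (xs_symm a b n)
  set f : Fin (2 * n) → Fin (2 * n) → ℝ := fun i j => gw a b n j / (n * a + n * b - gw a b n i) with hf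
  have hx : ∀ i j, xs a b n i j = n * (f j i + f i j) := fun i j => rfl
  have h1 : ∑ i, ∑ j, xs a b n i j = 2 * n * ∑ i, ∑ j, f i j := by
    simp only [hx, ← Finset.mul_sum, Finset.sum_add_distrib]
    rw [Finset.sum_comm (f := fun i j => f j i)]; ring
  have h2 : ∑ i, xs a b n i i = 2 * n * ∑ i, f i i := by
    simp only [hx, ← Finset.mul_sum, Finset.sum_add_distrib]; ring
  have h3 : ∑ i, ∑ j, f i j - ∑ i, f i i = 2 * n := by
    rw [← Finset.sum_sub_distrib]
    have : ∀ i, ∑ j, f i j - f i i = 1 := by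
      intro i
      simp only [hf]
      rw [← Finset.sum_div, sum_gw, ← sub_div]
      exact div_self (G_pos a b n hn ha hb i).ne'
    simp [this]
  have : 2 * n * (∑ i, ∑ j, f i j - ∑ i, f i i) = 2 * n * (2 * n) := by rw [h3]
  nlinarith

lemma Zsum_pos (n : ℕ) (hn : 2 ≤ n) (y : Fin (2 * n) → EuclideanSpace ℝ (Fin 2)) : 0 < Zsum y := by
  unfold Zsum
  have hnn : ∀ i j, 0 ≤ (if i < j then (1 + ‖y i - y j‖ ^ 2)⁻¹ else 0) := by
    intro i j; split_ifs <;> positivity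
  refine Finset.sum_pos' (fun i _ => Finset.sum_nonneg fun j _ => hnn i j)
    ⟨⟨0, by omega⟩, Finset.mem_univ _, ?_⟩
  refine Finset.sum_pos' (fun j _ => hnn _ j) ⟨⟨1, by omega⟩, Finset.mem_univ _, ?_⟩
  rw [if_pos (by simp)]
  positivity

lemma sum_q (n : ℕ) (hn : 2 ≤ n) (y : Fin (2 * n) → EuclideanSpace ℝ (Fin 2)) :
    ∑ i, ∑ j, (if i < j then qmat y i j else 0) = 1 := by
  have hZ := Zsum_pos n hn y
  have : ∀ i j, (if i < j then qmat y i j else 0)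
      = (if i < j then (1 + ‖y i - y j‖ ^ 2)⁻¹ else 0) / Zsum y := by
    intro i j; unfold qmat; split_ifs <;> simp
  simp only [this, ← Finset.sum_div]
  exact div_self hZ.ne'

lemma l1_bound {N : ℕ} (p q : Fin N → Fin N → ℝ) (ε : ℝ) (hε : 0 < ε)
    (hp : ∀ i j, 0 < p i j) (hq : ∀ i j, 0 < q i j)
    (hp1 : ∑ i, ∑ j, (if i < j then p i j else 0) = 1)
    (hq1 : ∑ i, ∑ j, (if i < j then q i j else 0) = 1) :
    ∑ i, ∑ j, (if i < j then |p i j - q i j| else 0) ≤ KLpairs p q / (2 * ε) + 2 * ε := by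
  have h1 : ∑ i, ∑ j, (if i < j then |p i j - q i j| else 0) ≤
      ∑ i, ∑ j, (((if i < j then p i j * Real.log (p i j / q i j) else 0)
        - (if i < j then p i j else 0) + (if i < j then q i j else 0)) / (2 * ε)
        + ε * ((if i < j then p i j else 0) + (if i < j then q i j else 0))) := by
    refine Finset.sum_le_sum fun i _ => Finset.sum_le_sum fun j _ => ?_
    split_ifs
    · exact kl_pt _ _ _ (hp i j) (hq i j) hε
    · simp
  refine h1.trans (le_of_eq ?_)
  simp only [Finset.sum_add_distrib, ← Finset.mul_sum, ← Finset.sum_div, Finset.sum_sub_distrib]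
  rw [hp1, hq1]
  unfold KLpairs
  ring

lemma sum_hstar (a b η : ℝ) (n : ℕ) :
    ∑ i, ∑ j, gw 1 (-1) n i * gw 1 (-1) n j * Real.exp (-(η / xs a b n i j)) =
    n ^ 2 * (Real.exp (-(η / (n * (a / (n * a + n * b - a) + a / (n * a + n * b - a)))))
    + Real.exp (-(η / (n * (b / (n * a + n * b - b) + b / (n * a + n * b - b)))))
    - 2 * Real.exp (-(η / (n * (a / (n * a + n * b - b) + b / (n * a + n * b - a)))))) := by
  set A := Real.exp (-(η / (n * (a / (n * a + n * b - a) + a / (n * a + n * b - a)))))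
  set B := Real.exp (-(η / (n * (b / (n * a + n * b - b) + b / (n * a + n * b - b)))))
  set C := Real.exp (-(η / (n * (a / (n * a + n * b - b) + b / (n * a + n * b - a))))) with hC
  have hC' : Real.exp (-(η / (n * (b / (n * a + n * b - a) + a / (n * a + n * b - b))))) = C := by
    rw [hC, add_comm (b / _)]
  have h : ∀ i j : Fin (2 * n), gw 1 (-1) n i * gw 1 (-1) n j * Real.exp (-(η / xs a b n i j)) =
      if (j : ℕ) < n then (if (i : ℕ) < n then A else -C) else (if (i : ℕ) < n then -C else B) := by
    intro i j
    unfold xs gw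
    split_ifs
    · simp [A]
    · simp [C]
    · rw [hC']; ring
    · simp [B]
  simp only [h, sum_half]
  simp only [Finset.sum_add_distrib, ← Finset.mul_sum, sum_half]
  ring

theorem core (a b : ℝ) (hb : 0 < b) (hab : b < a) :
    ∃ c : ℝ, 0 < c ∧ ∃ N : ℕ, ∀ n : ℕ, N ≤ n → 2 ≤ n ∧
      ∀ y : Fin (2 * n) → EuclideanSpace ℝ (Fin 2),
        c ≤ KLpairs (fun i j => xs a b n i j / (2 * (n : ℝ) ^ 2)) (qmat y) := by
  have ha : 0 < a := hb.trans hab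
  have hr : b / a < 1 := by rw [div_lt_one ha]; exact hab
  obtain ⟨δ, hδ⟩ : ∃ δ, δ = (1 - b / a) ^ 2 / (4 * (b / a)) := ⟨_, rfl⟩
  obtain ⟨M, hM⟩ : ∃ M, M = ((1 + b / a) ^ 2 + (1 + a / b) ^ 2) / 4 := ⟨_, rfl⟩
  have hδ0 : 0 < δ := by
    rw [hδ]; have : 0 < 1 - b / a := by linarith
    positivity
  have hM0 : 0 < M := by rw [hM]; positivity
  obtain ⟨η, hη⟩ : ∃ η, η = δ / (2 * M) := ⟨_, rfl⟩
  have hη0 : 0 < η := by rw [hη]; positivity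
  have hηM : η * M ≤ δ / 2 := by rw [hη]; apply le_of_eq; field_simp
  obtain ⟨κ, hκ⟩ : ∃ κ, κ = η * δ / 2 := ⟨_, rfl⟩
  have hκ0 : 0 < κ := by rw [hκ]; positivity
  obtain ⟨ε, hε⟩ : ∃ ε, ε = η * κ / 256 := ⟨_, rfl⟩
  have hε0 : 0 < ε := by rw [hε]; positivity
  obtain ⟨N1, hN1⟩ := exists_nat_ge (1 / δ)
  obtain ⟨N2, hN2⟩ := exists_nat_ge (4 / κ)
  refine ⟨4 * ε ^ 2, by positivity, max 2 (max N1 N2), fun n hn => ?_⟩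
  have hn2 : 2 ≤ n := le_trans (le_max_left _ _) hn
  refine ⟨hn2, fun y => ?_⟩
  have hnN1 : (N1 : ℝ) ≤ n := by
    exact_mod_cast le_trans (le_trans (le_max_left _ _) (le_max_right _ _)) hn
  have hnN2 : (N2 : ℝ) ≤ n := by
    exact_mod_cast le_trans (le_trans (le_max_right _ _) (le_max_right _ _)) hn
  have hn0 : (0 : ℝ) < n := by exact_mod_cast (by omega : 0 < n)
  have hnδ : 1 ≤ n * δ := by
    rw [← div_le_iff₀ hδ0]; exact hN1.trans hnN1
  have hnκ : 4 ≤ n * κ := by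
    rw [← div_le_iff₀ hκ0]; exact hN2.trans hnN2
  by_contra hlt
  push Not at hlt
  set p : Fin (2 * n) → Fin (2 * n) → ℝ := fun i j => xs a b n i j / (2 * (n : ℝ) ^ 2) with hp
  have hZ := Zsum_pos n hn2 y
  have hppos : ∀ i j, 0 < p i j := fun i j => div_pos (xs_pos a b n hn2 ha hb i j) (by positivity)
  have hqpos : ∀ i j, 0 < qmat y i j := fun i j => by unfold qmat; positivity
  have hp1 : ∑ i, ∑ j, (if i < j then p i j else 0) = 1 := by
    have : ∀ i j, (if i < j then p i j else 0)
        = (if i < j then xs a b n i j else 0) / (2 * (n : ℝ) ^ 2) := by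
      intro i j; split_ifs <;> simp [hp]
    simp only [this, ← Finset.sum_div]
    rw [sum_xs a b n hn2 ha hb]
    exact div_self (by positivity)
  have hl1 := l1_bound p (qmat y) ε hε0 hppos hqpos hp1 (sum_q n hn2 y)
  have hl1' : ∑ i, ∑ j, (if i < j then |p i j - qmat y i j| else 0) ≤ 4 * ε := by
    have : KLpairs p (qmat y) / (2 * ε) ≤ 2 * ε := by
      rw [div_le_iff₀ (by positivity)]; nlinarith
    linarith
  -- Gaussian scale
  set s := η * Zsum y / (2 * (n : ℝ) ^ 2) with hs
  have hs0 : 0 ≤ s := by positivity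
  set h : Fin (2 * n) → Fin (2 * n) → ℝ := fun i j => Real.exp (-(s * (1 + ‖y i - y j‖ ^ 2))) with hh
  set hst : Fin (2 * n) → Fin (2 * n) → ℝ := fun i j => Real.exp (-(η / xs a b n i j)) with hhst
  have hpd : 0 ≤ ∑ i, ∑ j, gw 1 (-1) n i * gw 1 (-1) n j * h i j := by
    have h0 := gauss_pd (gw 1 (-1) n) y s hs0
    have : ∀ i j, gw 1 (-1) n i * gw 1 (-1) n j * h i j = Real.exp (-s) *
        (gw 1 (-1) n i * gw 1 (-1) n j * Real.exp (-(s * ‖y i - y j‖ ^ 2))) := by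
      intro i j
      have : h i j = Real.exp (-s) * Real.exp (-(s * ‖y i - y j‖ ^ 2)) := by
        rw [← Real.exp_add, hh]; simp only; congr 1; ring
      rw [this]; ring
    simp only [this, ← Finset.mul_sum]
    positivity
  have hdiff : ∀ i j, |h i j - hst i j| ≤ 4 / η * (2 * (n : ℝ) ^ 2) * |p i j - qmat y i j| := by
    intro i j
    have e1 : h i j = Real.exp (-(η / (2 * (n : ℝ) ^ 2 * qmat y i j))) := by
      simp only [hh, hs, qmat]; congr 2; field_simp
    have e2 : hst i j = Real.exp (-(η / (2 * (n : ℝ) ^ 2 * p i j))) := by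
      simp only [hhst, hp]; congr 3; field_simp
    rw [e1, e2]
    refine (lip η _ _ hη0 (by have := hqpos i j; positivity)
      (by have := hppos i j; positivity)).trans (le_of_eq ?_)
    rw [← mul_sub, abs_mul, abs_of_pos (by positivity : (0 : ℝ) < 2 * (n : ℝ) ^ 2),
      abs_sub_comm]
    ring
  have hsymm := sum_symm (fun i j => |h i j - hst i j|) (by
    intro i j
    simp only [hh, hhst]
    rw [norm_sub_rev, xs_symm])
  have hdiag : ∑ i, |h i i - hst i i| ≤ 2 * n := by
    have : ∀ i, |h i i - hst i i| ≤ 1 := by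
      intro i
      have a1 : 0 < h i i := Real.exp_pos _
      have a2 : 0 < hst i i := Real.exp_pos _
      have a3 : h i i ≤ 1 := Real.exp_le_one_iff.2 (by
        have : 0 ≤ s * (1 + ‖y i - y i‖ ^ 2) := by positivity
        linarith)
      have a4 : hst i i ≤ 1 := Real.exp_le_one_iff.2 (by
        have : 0 ≤ η / xs a b n i i := (div_pos hη0 (xs_pos a b n hn2 ha hb i i)).le
        linarith)
      rw [abs_le]; constructor <;> linarith
    calc _ ≤ ∑ i : Fin (2 * n), (1 : ℝ) := Finset.sum_le_sum fun i _ => this i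
      _ = _ := by simp
  have hoff : ∑ i, ∑ j, (if i < j then |h i j - hst i j| else 0) ≤
      4 / η * (2 * (n : ℝ) ^ 2) * (4 * ε) := by
    refine le_trans ?_ (mul_le_mul_of_nonneg_left hl1' (by positivity))
    simp only [Finset.mul_sum]
    refine Finset.sum_le_sum fun i _ => Finset.sum_le_sum fun j _ => ?_
    split_ifs
    · exact hdiff i j
    · simp
  have hw : ∀ i, |gw 1 (-1) n i| = 1 := by intro i; unfold gw; split_ifs <;> simp
  have hcmp : ∑ i, ∑ j, gw 1 (-1) n i * gw 1 (-1) n j * h i j ≤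
      ∑ i, ∑ j, gw 1 (-1) n i * gw 1 (-1) n j * hst i j + ∑ i, ∑ j, |h i j - hst i j| := by
    simp only [← Finset.sum_add_distrib]
    refine Finset.sum_le_sum fun i _ => Finset.sum_le_sum fun j _ => ?_
    have := le_abs_self (gw 1 (-1) n i * gw 1 (-1) n j * (h i j - hst i j))
    rw [abs_mul, abs_mul, hw, hw] at this
    linarith
  have hk := kappa a b η δ M n hb hab hn2 hη0 hδ hM hnδ hηM
  rw [← hκ] at hk
  have hstar := sum_hstar a b η n
  have hstar' : ∑ i, ∑ j, gw 1 (-1) n i * gw 1 (-1) n j * hst i j ≤ (n : ℝ) ^ 2 * (-κ) := by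
    rw [hstar]; exact mul_le_mul_of_nonneg_left hk (by positivity)
  have hval : 4 / η * (2 * (n : ℝ) ^ 2) * (4 * ε) = κ * (n : ℝ) ^ 2 / 8 := by
    rw [hε]; field_simp; norm_num
  have hfin : 0 ≤ (n : ℝ) ^ 2 * (-κ) + (2 * n + 2 * (κ * (n : ℝ) ^ 2 / 8)) := by
    rw [← hval]; linarith
  nlinarith

lemma frame_dist (n : ℕ) (i j : Fin (2 * n)) (hij : i ≠ j) :
    ‖doubledFrame n i - doubledFrame n j‖ ^ 2 = gw 1 4 n i + gw 1 4 n j := by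
  rw [@norm_sub_sq_real]
  unfold doubledFrame
  rw [real_inner_smul_left, real_inner_smul_right, EuclideanSpace.inner_single_left]
  simp only [norm_smul, EuclideanSpace.norm_single, gw]
  have : (EuclideanSpace.single j (1 : ℝ)) i = 0 := by simp [hij]
  rw [this]
  split_ifs <;> norm_num

lemma exp_frame (n : ℕ) (σ : ℝ) (i j : Fin (2 * n)) (hij : i ≠ j) :
    Real.exp (-‖doubledFrame n i - doubledFrame n j‖ ^ 2 / (2 * σ ^ 2)) =
      gw (Real.exp (-1 / (2 * σ ^ 2))) (Real.exp (-4 / (2 * σ ^ 2))) n i *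
      gw (Real.exp (-1 / (2 * σ ^ 2))) (Real.exp (-4 / (2 * σ ^ 2))) n j := by
  rw [frame_dist n i j hij]
  have : ∀ i, gw (Real.exp (-1 / (2 * σ ^ 2))) (Real.exp (-4 / (2 * σ ^ 2))) n i
      = Real.exp (-gw 1 4 n i / (2 * σ ^ 2)) := by
    intro i; unfold gw; split_ifs <;> rfl
  rw [this, this, ← Real.exp_add]
  congr 1; ring

lemma pcond_frame (n : ℕ) (σ : ℝ) (i j : Fin (2 * n)) (hij : i ≠ j) (a b : ℝ)
    (ha : a = Real.exp (-1 / (2 * σ ^ 2))) (hb : b = Real.exp (-4 / (2 * σ ^ 2))) :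
    pcond (doubledFrame n) (fun _ => σ) i j = gw a b n j / (n * a + n * b - gw a b n i) := by
  unfold pcond
  simp only
  have hpos : 0 < gw a b n i := gw_pos a b n (by rw [ha]; positivity) (by rw [hb]; positivity) i
  rw [exp_frame n σ i j hij, ← ha, ← hb]
  rw [Finset.sum_congr rfl (g := fun k => gw a b n i * gw a b n k) (fun k hk => by
    rw [exp_frame n σ i k (Finset.ne_of_mem_erase hk).symm, ← ha, ← hb])]
  rw [← Finset.mul_sum, mul_div_mul_left _ _ hpos.ne', ← sum_gw,
    ← Finset.add_sum_erase Finset.univ _ (Finset.mem_univ i), add_sub_cancel_left]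

/-- for the doubled orthogonal frame with constant bandwidth `σ`, there is a
constant `c > 0` such that for all sufficiently large `n` and every embedding
`y : Fin (2n) → ℝ²`, the t-SNE objective satisfies `D(P‖Q) ≥ c`. -/
theorem stmt3 (σ : ℝ) (hσ : 0 < σ) :
    ∃ c : ℝ, 0 < c ∧ ∃ N : ℕ, ∀ n : ℕ, N ≤ n →
      ∀ y : Fin (2 * n) → EuclideanSpace ℝ (Fin 2),
        c ≤ KLpairs (pmat (doubledFrame n) (fun _ => σ)) (qmat y) := by
  obtain ⟨a, ha⟩ : ∃ a, a = Real.exp (-1 / (2 * σ ^ 2)) := ⟨_, rfl⟩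
  obtain ⟨b, hb⟩ : ∃ b, b = Real.exp (-4 / (2 * σ ^ 2)) := ⟨_, rfl⟩
  have hab : b < a := by
    rw [ha, hb, Real.exp_lt_exp]
    apply div_lt_div_of_pos_right (by norm_num) (by positivity)
  obtain ⟨c, hc, N, hN⟩ := core a b (by rw [hb]; positivity) hab
  refine ⟨c, hc, N, fun n hn y => ?_⟩
  obtain ⟨hn2, h⟩ := hN n hn
  refine (h y).trans (le_of_eq ?_)
  have hn0 : (n : ℝ) ≠ 0 := by
    have : n ≠ 0 := by omega
    exact_mod_cast this
  unfold KLpairs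
  refine Finset.sum_congr rfl fun i _ => Finset.sum_congr rfl fun j _ => ?_
  split_ifs with hij
  · have : pmat (doubledFrame n) (fun _ => σ) i j = xs a b n i j / (2 * (n : ℝ) ^ 2) := by
      unfold pmat xs
      rw [pcond_frame n σ i j hij.ne a b ha hb, pcond_frame n σ j i hij.ne' a b ha hb]
      push_cast
      rw [div_eq_div_iff (by positivity) (by positivity)]
      ring
    rw [this]
  · rfl

end
end

section
/- Let X = {x_1, …, x_n} ⊂ ℝ^d be an equidistant set, i.e., there is ρ > 0 with ‖x_i − x_j‖ = ρ for all i ≠ j, let σ_1, …, σ_n > 0 be arbitrary bandwidths, and let the t-SNE output dimension be s with n > s + 1. Then every global minimizer (y_1, …, y_n) ∈ (ℝ^s)^n of the t-SNE objective D(P‖Q) — that is, every tuple attaining the infimum of D(P‖Q) over all tuples in (ℝ^s)^n — satisfies y_1 = y_2 = ⋯ = y_n. -/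
open Finset

noncomputable section

lemma aux_aff {n s : ℕ} (y : Fin n → EuclideanSpace ℝ (Fin s)) (r : ℝ) (hr : 0 < r)
    (h : ∀ i j : Fin n, i ≠ j → ‖y i - y j‖ ^ 2 = r) : AffineIndependent ℝ y := by
  rw [affineIndependent_iff]
  intro t w hw hwy
  have key : ∀ j ∈ t, r * w j = - ∑ i ∈ t, w i * ‖y i‖ ^ 2 := by
    intro j hj
    have h1 : ∑ i ∈ t, w i * ‖y i - y j‖ ^ 2 = ∑ i ∈ t, w i * ‖y i‖ ^ 2 := by
      have h2 : ∑ i ∈ t, w i * inner ℝ (y i) (y j) = 0 := by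
        have := congrArg (fun v => inner ℝ v (y j)) hwy
        simpa [sum_inner, inner_smul_left] using this
      have h3 : ∀ i, w i * ‖y i - y j‖ ^ 2 =
          w i * ‖y i‖ ^ 2 - 2 * (w i * inner ℝ (y i) (y j)) + w i * ‖y j‖ ^ 2 := by
        intro i
        rw [norm_sub_sq_real]; ring
      simp only [h3, Finset.sum_add_distrib, Finset.sum_sub_distrib, ← Finset.mul_sum,
        ← Finset.sum_mul, h2, hw]
      ring
    have h4 : ∑ i ∈ t, w i * ‖y i - y j‖ ^ 2 = - (r * w j) := by
      have h5 : ∀ i ∈ t, w i * ‖y i - y j‖ ^ 2 = w i * r - (if i = j then w i * r else 0) := by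
        intro i _
        by_cases hij : i = j
        · subst hij; simp
        · simp [hij, h i j hij]
      rw [Finset.sum_congr rfl h5, Finset.sum_sub_distrib, ← Finset.sum_mul, hw,
        Finset.sum_ite_eq' t j, if_pos hj]
      ring
    linarith
  intro e he
  have h6 : ∑ j ∈ t, r * w j = 0 := by rw [← Finset.mul_sum, hw, mul_zero]
  have h7 : ∑ j ∈ t, r * w j = t.card * (r * w e) := by
    rw [Finset.sum_congr rfl (fun j hj => (key j hj).trans (key e he).symm)]
    simp
  rw [h7] at h6
  have : (t.card : ℝ) ≠ 0 := by
    exact_mod_cast (Finset.card_pos.2 ⟨e, he⟩).ne'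
  rcases mul_eq_zero.1 h6 with h8 | h8
  · exact absurd h8 this
  · rcases mul_eq_zero.1 h8 with h9 | h9
    · exact absurd h9 hr.ne'
    · exact h9

lemma aux_log {p q : ℝ} (hp : 0 < p) (hq : 0 < q) : p - q ≤ p * Real.log (p / q) := by
  have h := Real.log_le_sub_one_of_pos (div_pos hq hp)
  have : Real.log (p / q) = - Real.log (q / p) := by rw [← Real.log_inv, inv_div]
  rw [this]
  have h2 := mul_le_mul_of_nonneg_left h hp.le
  have h3 : p * (q / p - 1) = q - p := by field_simp
  linarith

lemma aux_log_eq {p q : ℝ} (hp : 0 < p) (hq : 0 < q) (he : p * Real.log (p / q) = p - q) :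
    p = q := by
  by_contra hne
  have h := Real.log_lt_sub_one_of_pos (div_pos hq hp)
    (by intro h; rw [div_eq_one_iff_eq hp.ne'] at h; exact hne h.symm)
  have : Real.log (p / q) = - Real.log (q / p) := by rw [← Real.log_inv, inv_div]
  rw [this] at he
  have h2 := mul_lt_mul_of_pos_left h hp
  have h3 : p * (q / p - 1) = q - p := by field_simp
  linarith

lemma aux_count (n : ℕ) :
    (∑ i : Fin n, ∑ j : Fin n, if i < j then (1 : ℝ) else 0) = n * (n - 1) / 2 := by
  have h1 : (∑ i : Fin n, ∑ j : Fin n, if i < j then (1 : ℝ) else 0)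
      = ∑ i : Fin n, ∑ j : Fin n, if j < i then (1 : ℝ) else 0 := Finset.sum_comm
  have h2 : (∑ i : Fin n, ∑ j : Fin n, if i < j then (1 : ℝ) else 0)
      + (∑ i : Fin n, ∑ j : Fin n, if j < i then (1 : ℝ) else 0) = n * (n - 1) := by
    rw [← Finset.sum_add_distrib]
    have : ∀ i : Fin n, ((∑ j : Fin n, if i < j then (1 : ℝ) else 0)
        + ∑ j : Fin n, if j < i then (1 : ℝ) else 0) = n - 1 := by
      intro i
      rw [← Finset.sum_add_distrib]
      have h3 : ∀ j : Fin n, ((if i < j then (1 : ℝ) else 0) + if j < i then (1 : ℝ) else 0)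
          = 1 - if j = i then 1 else 0 := by
        intro j
        rcases lt_trichotomy i j with h | h | h
        · simp [h, h.not_gt, h.ne']
        · simp [h]
        · simp [h, h.not_gt, h.ne]
      simp [h3, Finset.sum_sub_distrib]
    rw [Finset.sum_congr rfl (fun i _ => this i)]
    simp; ring
  linarith

lemma aux_Zpos {n s : ℕ} (hn : 1 < n) (y : Fin n → EuclideanSpace ℝ (Fin s)) : 0 < Zsum y := by
  unfold Zsum
  have h0 : ∀ i j : Fin n, 0 ≤ if i < j then (1 + ‖y i - y j‖ ^ 2)⁻¹ else 0 := by
    intro i j; split_ifs <;> positivity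
  refine Finset.sum_pos' (fun i _ => Finset.sum_nonneg fun j _ => h0 i j)
    ⟨⟨0, by omega⟩, Finset.mem_univ _, ?_⟩
  refine Finset.sum_pos' (fun j _ => h0 _ j) ⟨⟨1, hn⟩, Finset.mem_univ _, ?_⟩
  rw [if_pos (by simp [Fin.lt_def])]
  positivity

lemma aux_qsum {n s : ℕ} (hn : 1 < n) (y : Fin n → EuclideanSpace ℝ (Fin s)) :
    (∑ i, ∑ j, if i < j then qmat y i j else 0) = 1 := by
  have hZ := aux_Zpos hn y
  have : (∑ i, ∑ j, if i < j then qmat y i j else 0) = Zsum y / Zsum y := by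
    conv_rhs => enter [1]; unfold Zsum
    rw [Finset.sum_div]
    refine Finset.sum_congr rfl fun i _ => ?_
    rw [Finset.sum_div]
    refine Finset.sum_congr rfl fun j _ => ?_
    split_ifs <;> simp [qmat]
  rw [this, div_self hZ.ne']

lemma aux_pcond {n d : ℕ} (hn : 1 < n) (x : Fin n → EuclideanSpace ℝ (Fin d)) (ρ : ℝ)
    (hx : ∀ i j : Fin n, i ≠ j → ‖x i - x j‖ = ρ) (σ : Fin n → ℝ) (i j : Fin n) (hij : i ≠ j) :
    pcond x σ i j = 1 / ((n : ℝ) - 1) := by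
  unfold pcond
  rw [Finset.sum_congr rfl (g := fun _ => Real.exp (-ρ ^ 2 / (2 * σ i ^ 2)))
    (fun k hk => by rw [hx i k (Finset.ne_of_mem_erase hk).symm]), hx i j hij]
  have h1 : (1 : ℝ) < n := by exact_mod_cast hn
  have h2 : (n : ℝ) - 1 ≠ 0 := by linarith
  rw [Finset.sum_const, Finset.card_erase_of_mem (Finset.mem_univ _), nsmul_eq_mul,
    Finset.card_univ, Fintype.card_fin, Nat.cast_sub hn.le, Nat.cast_one]
  have := (Real.exp_pos (-ρ ^ 2 / (2 * σ i ^ 2))).ne'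
  field_simp

/-- if `X ⊂ ℝ^d` is an equidistant set of `n > s + 1` points, with arbitrary
positive bandwidths, then every global minimizer of the t-SNE objective `D(P‖Q)` with
`s`-dimensional output has all points `y_1, …, y_n` coinciding. -/
theorem stmt5 (d s n : ℕ) (hn : s + 1 < n)
    (x : Fin n → EuclideanSpace ℝ (Fin d)) (ρ : ℝ) (hρ : 0 < ρ)
    (hx : ∀ i j : Fin n, i ≠ j → ‖x i - x j‖ = ρ)
    (σ : Fin n → ℝ) (hσ : ∀ i, 0 < σ i)
    (y : Fin n → EuclideanSpace ℝ (Fin s))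
    (hmin : ∀ y' : Fin n → EuclideanSpace ℝ (Fin s),
      KLpairs (pmat x σ) (qmat y) ≤ KLpairs (pmat x σ) (qmat y')) :
    ∀ i j : Fin n, y i = y j := by
  have hn1 : 1 < n := by omega
  have hnR : (1 : ℝ) < n := by exact_mod_cast hn1
  have hnm : (0 : ℝ) < n - 1 := by linarith
  have hn0 : (0 : ℝ) < n := by linarith
  set c : ℝ := 2 / (n * (n - 1)) with hc
  have hcpos : 0 < c := by positivity
  have hp : ∀ i j : Fin n, i < j → pmat x σ i j = c := by
    intro i j hij
    rw [pmat, aux_pcond hn1 x ρ hx σ i j hij.ne, aux_pcond hn1 x ρ hx σ j i hij.ne', hc]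
    field_simp
    norm_num
  have hq0 : ∀ i j : Fin n, qmat (fun _ : Fin n => (0 : EuclideanSpace ℝ (Fin s))) i j = c := by
    intro i j
    have := aux_count n
    simp only [qmat, Zsum, sub_self, norm_zero]
    norm_num
    norm_num at this
    rw [this, hc]
    field_simp
  have hK0 : KLpairs (pmat x σ) (qmat (fun _ : Fin n => (0 : EuclideanSpace ℝ (Fin s)))) = 0 := by
    unfold KLpairs
    refine Finset.sum_eq_zero fun i _ => Finset.sum_eq_zero fun j _ => ?_
    split_ifs with h
    · rw [hp i j h, hq0, div_self hcpos.ne', Real.log_one, mul_zero]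
    · rfl
  have hK := hmin (fun _ => 0)
  rw [hK0] at hK
  have hZ := aux_Zpos hn1 y
  have hqpos : ∀ i j : Fin n, 0 < qmat y i j := by
    intro i j; unfold qmat; positivity
  have hs1 := aux_qsum hn1 y
  have hs2 : (∑ i : Fin n, ∑ j : Fin n, if i < j then c else 0) = 1 := by
    have := aux_qsum hn1 (fun _ : Fin n => (0 : EuclideanSpace ℝ (Fin s)))
    simpa only [hq0] using this
  let g : Fin n → Fin n → ℝ := fun i j =>
    (if i < j then pmat x σ i j * Real.log (pmat x σ i j / qmat y i j) else 0)
      - ((if i < j then c else 0) - (if i < j then qmat y i j else 0))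
  have hg0 : ∀ i j, 0 ≤ g i j := by
    intro i j
    simp only [g]
    split_ifs with h
    · rw [hp i j h]
      linarith [aux_log hcpos (hqpos i j)]
    · simp
  have hgs : ∑ i, ∑ j, g i j ≤ 0 := by
    simp only [g, Finset.sum_sub_distrib, hs1, hs2]
    unfold KLpairs at hK
    linarith
  have hgz : ∀ i j, g i j = 0 := by
    have h1 : ∑ i, ∑ j, g i j = 0 :=
      le_antisymm hgs (Finset.sum_nonneg fun i _ => Finset.sum_nonneg fun j _ => hg0 i j)
    intro i j
    have h2 := (Finset.sum_eq_zero_iff_of_nonneg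
      (fun i _ => Finset.sum_nonneg fun j _ => hg0 i j)).1 h1 i (Finset.mem_univ _)
    exact (Finset.sum_eq_zero_iff_of_nonneg (fun j _ => hg0 i j)).1 h2 j (Finset.mem_univ _)
  have hlt : ∀ i j : Fin n, i < j → ‖y i - y j‖ ^ 2 = (c * Zsum y)⁻¹ - 1 := by
    intro i j hij
    have h1 := hgz i j
    simp only [g, if_pos hij, hp i j hij] at h1
    have h2 := aux_log_eq hcpos (hqpos i j) (by linarith)
    have h3 : c * Zsum y = (1 + ‖y i - y j‖ ^ 2)⁻¹ := by
      rw [h2, qmat]; field_simp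
    rw [h3, inv_inv]; ring
  have hne : ∀ i j : Fin n, i ≠ j → ‖y i - y j‖ ^ 2 = (c * Zsum y)⁻¹ - 1 := by
    intro i j hij
    rcases lt_or_gt_of_ne hij with h | h
    · exact hlt i j h
    · rw [norm_sub_rev]; exact hlt j i h
  intro i j
  by_contra hy
  have hij : i ≠ j := fun h => hy (by rw [h])
  have hr : 0 < (c * Zsum y)⁻¹ - 1 := by
    rw [← hne i j hij]
    have : 0 < ‖y i - y j‖ := norm_pos_iff.2 (sub_ne_zero.2 hy)
    positivity
  have hcard := (aux_aff y _ hr hne).card_le_finrank_succ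
  have h2 := Submodule.finrank_le (vectorSpan ℝ (Set.range y))
  rw [finrank_euclideanSpace, Fintype.card_fin] at h2
  rw [Fintype.card_fin] at hcard
  omega

end
end

section
/- For each n, let Y_n = (y_1, …, y_n) be a tuple of n points in ℝ², let Q_n be the associated t-SNE output distribution on unordered pairs of [n], and let U_n be the uniform distribution on unordered pairs. Let r : ℕ → (0, ∞) satisfy r(n) → 0, and suppose that d_TV(U_n, Q_n)/r(n)³ → 0 as n → ∞. Then for all sufficiently large n there exists an open ball in ℝ² of radius r(n) containing at least (1 − r(n))·n of the points y_1, …, y_n. -/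
open Filter Finset
open scoped Classical

noncomputable section

/-- Total variation distance between the uniform distribution on unordered pairs of `[n]`
and the t-SNE output distribution `Q` of `y : Fin n → ℝ²`. -/
def dTVtoUnif {n : ℕ} (y : Fin n → EuclideanSpace ℝ (Fin 2)) : ℝ :=
  (1 / 2) * ∑ i, ∑ j, if i < j then
    |1 / ((n : ℝ) * ((n : ℝ) - 1) / 2) - qmat y i j| else 0

lemma aux_real (a0 b0 a1 b1 a2 b2 a3 b3 p q s A e : ℝ)
    (hpos : 0 < p ^ 2 + q ^ 2 + s ^ 2)
    (h0 : (p * (a1 - a0) + q * (a2 - a0) + s * (a3 - a0)) ^ 2 +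
      (p * (b1 - b0) + q * (b2 - b0) + s * (b3 - b0)) ^ 2 = 0)
    (h10 : -e ≤ (a1 - a0) ^ 2 + (b1 - b0) ^ 2 - A ∧ (a1 - a0) ^ 2 + (b1 - b0) ^ 2 - A ≤ e)
    (h20 : -e ≤ (a2 - a0) ^ 2 + (b2 - b0) ^ 2 - A ∧ (a2 - a0) ^ 2 + (b2 - b0) ^ 2 - A ≤ e)
    (h30 : -e ≤ (a3 - a0) ^ 2 + (b3 - b0) ^ 2 - A ∧ (a3 - a0) ^ 2 + (b3 - b0) ^ 2 - A ≤ e)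
    (h12 : -e ≤ (a1 - a2) ^ 2 + (b1 - b2) ^ 2 - A ∧ (a1 - a2) ^ 2 + (b1 - b2) ^ 2 - A ≤ e)
    (h13 : -e ≤ (a1 - a3) ^ 2 + (b1 - b3) ^ 2 - A ∧ (a1 - a3) ^ 2 + (b1 - b3) ^ 2 - A ≤ e)
    (h23 : -e ≤ (a2 - a3) ^ 2 + (b2 - b3) ^ 2 - A ∧ (a2 - a3) ^ 2 + (b2 - b3) ^ 2 - A ≤ e)
    : A ≤ 9 * e := by
  have key : ∀ P Q d : ℝ, |d| ≤ 3 * e → -(3 * e * (P ^ 2 + Q ^ 2)) ≤ 2 * (P * Q * d) := by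
    intro P Q d hd
    have h1 : |2 * (P * Q * d)| ≤ (P ^ 2 + Q ^ 2) * (3 * e) := by
      have : |2 * (P * Q * d)| = (2 * |P| * |Q|) * |d| := by
        simp [abs_mul]; ring
      rw [this]
      apply mul_le_mul _ hd (abs_nonneg _) (by positivity)
      nlinarith [sq_nonneg (|P| - |Q|), sq_abs P, sq_abs Q]
    have := (abs_le.1 h1).1
    linarith
  have k1 := key p q (((a1-a0)^2+(b1-b0)^2) + ((a2-a0)^2+(b2-b0)^2) - ((a1-a2)^2+(b1-b2)^2) - A)
    (abs_le.2 ⟨by linarith, by linarith⟩)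
  have k2 := key p s (((a1-a0)^2+(b1-b0)^2) + ((a3-a0)^2+(b3-b0)^2) - ((a1-a3)^2+(b1-b3)^2) - A)
    (abs_le.2 ⟨by linarith, by linarith⟩)
  have k3 := key q s (((a2-a0)^2+(b2-b0)^2) + ((a3-a0)^2+(b3-b0)^2) - ((a2-a3)^2+(b2-b3)^2) - A)
    (abs_le.2 ⟨by linarith, by linarith⟩)
  have m1 := mul_le_mul_of_nonneg_left h10.1 (sq_nonneg p)
  have m2 := mul_le_mul_of_nonneg_left h20.1 (sq_nonneg q)
  have m3 := mul_le_mul_of_nonneg_left h30.1 (sq_nonneg s)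
  have he : 0 ≤ e := by linarith
  by_contra hA
  push Not at hA
  have hA0 : 0 ≤ A := by linarith
  have n1 : 0 < (A - 9 * e) * (p ^ 2 + q ^ 2 + s ^ 2) := mul_pos (by linarith) hpos
  have n2 := mul_nonneg hA0 (sq_nonneg (p + q + s))
  have n3 := mul_nonneg he hpos.le
  linarith

lemma aux_geom (x : Fin 4 → EuclideanSpace ℝ (Fin 2)) (A e : ℝ) 
    (h : ∀ i j, i ≠ j → |‖x i - x j‖ ^ 2 - A| ≤ e) : A ≤ 9 * e := by
  set u : Fin 3 → EuclideanSpace ℝ (Fin 2) := ![x 1 - x 0, x 2 - x 0, x 3 - x 0] with hu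
  have hli : ¬ LinearIndependent ℝ u := by
    intro hl
    have := hl.fintype_card_le_finrank
    simp at this
  rw [Fintype.not_linearIndependent_iff] at hli
  obtain ⟨g, hg, k, hk⟩ := hli
  have hpos : 0 < g 0 ^ 2 + g 1 ^ 2 + g 2 ^ 2 := by
    have h1 : 0 < g k ^ 2 := by positivity
    fin_cases k <;> simp at h1 ⊢ <;> positivity
  have h0 : ‖g 0 • (x 1 - x 0) + g 1 • (x 2 - x 0) + g 2 • (x 3 - x 0)‖ ^ 2 = 0 := by
    have : g 0 • (x 1 - x 0) + g 1 • (x 2 - x 0) + g 2 • (x 3 - x 0) = 0 := by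
      simpa [Fin.sum_univ_three, hu] using hg
    rw [this]; simp
  have h10 := abs_le.1 (h 1 0 (by decide))
  have h20 := abs_le.1 (h 2 0 (by decide))
  have h30 := abs_le.1 (h 3 0 (by decide))
  have h12 := abs_le.1 (h 1 2 (by decide))
  have h13 := abs_le.1 (h 1 3 (by decide))
  have h23 := abs_le.1 (h 2 3 (by decide))
  rw [EuclideanSpace.norm_sq_eq] at h0 h10 h20 h30 h12 h13 h23
  simp only [Fin.sum_univ_two, Real.norm_eq_abs, sq_abs, PiLp.add_apply, PiLp.sub_apply,
    PiLp.smul_apply, smul_eq_mul] at h0 h10 h20 h30 h12 h13 h23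
  exact aux_real _ _ _ _ _ _ _ _ _ _ _ A e hpos h0 h10 h20 h30 h12 h13 h23

lemma aux_perm {n : ℕ} (f : Fin n → Fin n → ℝ) (a b a' b' : Fin n) (h : a ≠ b) (h' : a' ≠ b') :
    ∑ σ : Equiv.Perm (Fin n), f (σ a) (σ b) = ∑ σ : Equiv.Perm (Fin n), f (σ a') (σ b') := by
  obtain ⟨τ, h1, h2⟩ : ∃ τ : Equiv.Perm (Fin n), τ a = a' ∧ τ b = b' := by
    refine ⟨Equiv.swap (Equiv.swap a a' b) b' * Equiv.swap a a', ?_, ?_⟩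
    · simp only [Equiv.Perm.mul_apply, Equiv.swap_apply_left]
      apply Equiv.swap_apply_of_ne_of_ne _ h'
      intro hh
      apply h
      have : Equiv.swap a a' a = Equiv.swap a a' b := by simpa using hh
      exact (Equiv.swap a a').injective this
    · simp
  rw [← Equiv.sum_comp (Equiv.mulRight τ)]
  simp [h1, h2]

lemma aux_perm_sum {n : ℕ} (f : Fin n → Fin n → ℝ) (hf : ∀ i, f i i = 0) (a b : Fin n)
    (h : a ≠ b) :
    (n : ℝ) * (n - 1) * ∑ σ : Equiv.Perm (Fin n), f (σ a) (σ b) =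
      (Fintype.card (Equiv.Perm (Fin n)) : ℝ) * ∑ i, ∑ j, f i j := by
  have h1 : ∑ i : Fin n, ∑ j : Fin n, ∑ σ : Equiv.Perm (Fin n), f (σ i) (σ j) =
      (Fintype.card (Equiv.Perm (Fin n)) : ℝ) * ∑ i, ∑ j, f i j := by
    have : ∀ i : Fin n, ∑ j : Fin n, ∑ σ : Equiv.Perm (Fin n), f (σ i) (σ j) =
      ∑ σ : Equiv.Perm (Fin n), ∑ j : Fin n, f (σ i) (σ j) := fun i => Finset.sum_comm
    simp only [this]
    rw [Finset.sum_comm]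
    have h2 : ∀ σ : Equiv.Perm (Fin n), ∑ i, ∑ j, f (σ i) (σ j) = ∑ i, ∑ j, f i j := by
      intro σ
      rw [← Equiv.sum_comp σ (fun i => ∑ j, f i j)]
      refine Finset.sum_congr rfl fun i _ => ?_
      exact Equiv.sum_comp σ (fun j => f (σ i) j)
    simp [h2]
  rw [← h1]
  have h3 : ∀ i j : Fin n, ∑ σ : Equiv.Perm (Fin n), f (σ i) (σ j) =
      (if i = j then 0 else 1) * ∑ σ : Equiv.Perm (Fin n), f (σ a) (σ b) := by
    intro i j
    split_ifs with hij
    · subst hij; simp [hf]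
    · rw [one_mul]; exact aux_perm f i j a b hij h
  rw [Finset.sum_congr rfl fun i _ => Finset.sum_congr rfl fun j _ => h3 i j]
  simp only [← Finset.sum_mul]
  congr 1
  have : ∀ i j : Fin n, (if i = j then (0:ℝ) else 1) = 1 - if i = j then 1 else 0 := by
    intro i j; split_ifs <;> simp
  simp [this]
  ring

lemma aux_exists4 {n : ℕ} (hn : 4 ≤ n) (f : Fin n → Fin n → ℝ) (hf : ∀ i, f i i = 0)
    (hsym : ∀ i j, f i j = f j i) (hpos : ∀ i j, 0 ≤ f i j) (δ : ℝ)
    (hs : ∑ i, ∑ j, f i j ≤ δ * (n * (n - 1))) :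
    ∃ p : Fin 4 → Fin n, ∀ i j, i ≠ j → p i ≠ p j ∧ f (p i) (p j) ≤ 6 * δ := by
  have hn' : (4:ℝ) ≤ n := by exact_mod_cast hn
  have hN : (0:ℝ) < n * (n - 1) := by nlinarith
  let c : Fin 4 → Fin n := Fin.castLE hn
  have hc : ∀ i j, i ≠ j → c i ≠ c j := fun i j hij h => hij (Fin.castLE_injective hn h)
  have hS : ∀ i j, i ≠ j → ∑ σ : Equiv.Perm (Fin n), f (σ (c i)) (σ (c j)) ≤
      ∑ σ : Equiv.Perm (Fin n), δ := by
    intro i j hij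
    have := aux_perm_sum f hf (c i) (c j) (hc i j hij)
    rw [Finset.sum_const, nsmul_eq_mul, Finset.card_univ]
    have hcard : (0:ℝ) ≤ Fintype.card (Equiv.Perm (Fin n)) := by positivity
    have h2 := mul_le_mul_of_nonneg_left hs hcard
    rw [← this] at h2
    refine le_of_mul_le_mul_left ?_ hN
    linarith
  obtain ⟨σ, -, hσ⟩ := Finset.exists_le_of_sum_le (s := (univ : Finset (Equiv.Perm (Fin n))))
    (f := fun σ => f (σ (c 0)) (σ (c 1)) + f (σ (c 0)) (σ (c 2)) + f (σ (c 0)) (σ (c 3))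
      + f (σ (c 1)) (σ (c 2)) + f (σ (c 1)) (σ (c 3)) + f (σ (c 2)) (σ (c 3)))
    (g := fun _ => δ + δ + δ + δ + δ + δ) ⟨1, mem_univ _⟩ (by
      simp only [Finset.sum_add_distrib]
      have a1 := hS 0 1 (by decide)
      have a2 := hS 0 2 (by decide)
      have a3 := hS 0 3 (by decide)
      have a4 := hS 1 2 (by decide)
      have a5 := hS 1 3 (by decide)
      have a6 := hS 2 3 (by decide)
      linarith)
  refine ⟨fun i => σ (c i), fun i j hij => ⟨fun h => hc i j hij (σ.injective h), ?_⟩⟩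
  have b1 := hpos (σ (c 0)) (σ (c 1))
  have b2 := hpos (σ (c 0)) (σ (c 2))
  have b3 := hpos (σ (c 0)) (σ (c 3))
  have b4 := hpos (σ (c 1)) (σ (c 2))
  have b5 := hpos (σ (c 1)) (σ (c 3))
  have b6 := hpos (σ (c 2)) (σ (c 3))
  have key : ∀ i j : Fin 4, i < j → f (σ (c i)) (σ (c j)) ≤ 6 * δ := by
    intro i j hlt
    fin_cases i <;> fin_cases j <;> first | (exfalso; revert hlt; decide) | (dsimp at *; linarith)
  rcases lt_or_gt_of_ne hij with h | h
  · exact key i j h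
  · rw [hsym]; exact key j i h

lemma aux_symsum {n : ℕ} (f : Fin n → Fin n → ℝ) (hf : ∀ i, f i i = 0)
    (hsym : ∀ i j, f i j = f j i) :
    ∑ i, ∑ j, f i j = 2 * ∑ i, ∑ j, if i < j then f i j else 0 := by
  have h1 : ∀ i j, f i j = (if i < j then f i j else 0) + (if j < i then f j i else 0) := by
    intro i j
    rcases lt_trichotomy i j with h | h | h
    · simp [h, h.not_gt]
    · subst h; simp [hf]
    · simp [h, h.not_gt, hsym i j]
  calc ∑ i, ∑ j, f i j = ∑ i, ∑ j, ((if i < j then f i j else 0) + (if j < i then f j i else 0)) := by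
        refine Finset.sum_congr rfl fun i _ => Finset.sum_congr rfl fun j _ => h1 i j
    _ = _ := by
        simp only [Finset.sum_add_distrib]
        rw [Finset.sum_comm (f := fun i j => if j < i then f j i else 0)]
        ring

lemma aux_main {n : ℕ} (hn : 4 ≤ n) (y : Fin n → EuclideanSpace ℝ (Fin 2)) (r : ℝ) (hr : 0 < r)
    (hr1 : r ≤ 1) (ht : dTVtoUnif y ≤ r ^ 3 / 1000) :
    ∃ c : EuclideanSpace ℝ (Fin 2),
      (1 - r) * n ≤ (Finset.univ.filter (fun i : Fin n => y i ∈ Metric.ball c r)).card := by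
  have hn' : (4:ℝ) ≤ n := by exact_mod_cast hn
  have hN : (0:ℝ) < n * (n - 1) := by nlinarith
  set t := dTVtoUnif y with htdef
  set d : Fin n → Fin n → ℝ := fun i j => ‖y i - y j‖ ^ 2 with hd
  have hd0 : ∀ i j, 0 ≤ d i j := fun i j => by positivity
  have hdd : ∀ i, d i i = 0 := fun i => by simp [hd]
  have hds : ∀ i j, d i j = d j i := fun i j => by simp only [hd]; rw [norm_sub_rev]
  set M : ℝ := n * (n - 1) / 2 with hM
  have hMpos : 0 < M := by positivity
  have hcnt : ∑ i : Fin n, ∑ j : Fin n, (if i < j then (1:ℝ) else 0) = M := by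
    have := aux_symsum (fun i j : Fin n => if i = j then (0:ℝ) else 1) (by simp)
      (by intro i j; simp only [eq_comm])
    have e1 : ∀ i j : Fin n, (if i = j then (0:ℝ) else 1) = 1 - if i = j then 1 else 0 := by
      intro i j; split_ifs <;> simp
    have e2 : ∀ i j : Fin n, (if i < j then (if i = j then (0:ℝ) else 1) else 0) =
        if i < j then 1 else 0 := by
      intro i j
      by_cases h : i < j
      · simp [h, h.ne]
      · simp [h]
    simp only [e2] at this
    have e3 : ∑ i : Fin n, ∑ j : Fin n, (if i = j then (0:ℝ) else 1) = n * n - n := by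
      simp [e1]
    rw [e3] at this
    rw [hM]; linarith
  have hZle : Zsum y ≤ M := by
    rw [← hcnt]
    refine Finset.sum_le_sum fun i _ => Finset.sum_le_sum fun j _ => ?_
    split_ifs
    · exact inv_le_one_of_one_le₀ (by have := hd0 i j; simp only [hd] at this; linarith)
    · exact le_rfl
  have hZpos : 0 < Zsum y := by
    have hnn : ∀ i j : Fin n, 0 ≤ if i < j then (1 + ‖y i - y j‖ ^ 2)⁻¹ else 0 := by
      intro i j; split_ifs <;> positivity
    refine Finset.sum_pos' (fun i _ => Finset.sum_nonneg fun j _ => hnn i j)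
      ⟨⟨0, by omega⟩, mem_univ _, ?_⟩
    refine Finset.sum_pos' (fun j _ => hnn _ j) ⟨⟨1, by omega⟩, mem_univ _, ?_⟩
    rw [if_pos (by simp [Fin.lt_def])]
    positivity
  set T := M / Zsum y with hT
  have hT1 : 1 ≤ T := by rw [hT, le_div_iff₀ hZpos]; linarith
  set f : Fin n → Fin n → ℝ := fun i j => if i = j then 0 else |1 - T / (1 + d i j)| with hf
  have hff : ∀ i, f i i = 0 := fun i => by simp [hf]
  have hfs : ∀ i j, f i j = f j i := fun i j => by
    simp only [hf]; rw [hds i j]; simp only [eq_comm]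
  have hf0 : ∀ i j, 0 ≤ f i j := fun i j => by
    simp only [hf]; split_ifs <;> positivity
  have hsum : ∑ i, ∑ j, f i j = (2 * t) * (n * (n - 1)) := by
    rw [aux_symsum f hff hfs]
    have h1 : ∀ i j : Fin n, (if i < j then f i j else 0) =
        M * (if i < j then |1 / ((n : ℝ) * ((n : ℝ) - 1) / 2) - qmat y i j| else 0) := by
      intro i j
      by_cases h : i < j
      · simp only [h, if_true, hf, h.ne, if_false]
        rw [← hM, qmat, ← abs_of_pos hMpos, ← abs_mul, abs_of_pos hMpos]
        congr 1
        rw [hT]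
        have : 0 < 1 + d i j := by have := hd0 i j; linarith
        change _ = M * (1 / M - (1 + d i j)⁻¹ / Zsum y)
        field_simp
      · simp [h]
    simp only [h1, ← Finset.mul_sum]
    rw [htdef, dTVtoUnif, hM]
    ring
  have ht0 : 0 ≤ t := by
    have : 0 ≤ ∑ i, ∑ j, f i j := Finset.sum_nonneg fun i _ => Finset.sum_nonneg fun j _ => hf0 i j
    rw [hsum] at this
    have := nonneg_of_mul_nonneg_left this hN
    linarith
  have hr3 : r ^ 3 ≤ 1 := pow_le_one₀ hr.le hr1
  have hfd : ∀ i j, i ≠ j → f i j * (1 + d i j) = |d i j - (T - 1)| := by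
    intro i j hij
    have h1 : 0 < 1 + d i j := by have := hd0 i j; linarith
    simp only [hf, hij, if_false]
    rw [← abs_of_pos h1, ← abs_mul, abs_of_pos h1]
    congr 1
    field_simp
    ring
  have hD : T - 1 ≤ 432 * t := by
    obtain ⟨p, hp⟩ := aux_exists4 hn f hff hfs hf0 (2 * t) hsum.le
    have := aux_geom (fun i => y (p i)) (T - 1) (24 * t * T) (by
      intro i j hij
      obtain ⟨h1, h2⟩ := hp i j hij
      have h3 := hfd _ _ h1
      change |d (p i) (p j) - (T - 1)| ≤ _
      have h4 : |d (p i) (p j) - (T - 1)| ≤ 12 * t * (1 + d (p i) (p j)) := by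
        rw [← h3]
        apply mul_le_mul_of_nonneg_right (by linarith) 
        have := hd0 (p i) (p j); linarith
      have h5 := (abs_le.1 h4).2
      have h6 : 1 + d (p i) (p j) ≤ 2 * T := by
        have := hd0 (p i) (p j)
        nlinarith
      nlinarith)
    nlinarith
  set g : Fin n → Fin n → ℝ := fun i j => d i j / (1 + d i j) with hg
  have hg0 : ∀ i j, 0 ≤ g i j := fun i j => by
    have := hd0 i j
    simp only [hg]; positivity
  have hgf : ∀ i j, g i j ≤ f i j + 432 * t * (if i = j then 0 else 1) := by
    intro i j
    by_cases h : i = j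
    · subst h; simp [hg, hdd, hff]
    · simp only [h, if_false, mul_one, hg]
      have h1 := hfd i j h
      have h2 := hd0 i j
      rw [div_le_iff₀ (by linarith), add_mul, h1]
      have := le_abs_self (d i j - (T - 1))
      nlinarith
  have e1 : ∀ i : Fin n, ∑ j : Fin n, (if i = j then (0:ℝ) else 1) = n - 1 := by
    intro i
    have e1 : ∀ j : Fin n, (if i = j then (0:ℝ) else 1) = 1 - if i = j then 1 else 0 := by
      intro j; split_ifs <;> simp
    simp [e1]
  have hgs : ∑ i, ∑ j, g i j ≤ ∑ i : Fin n, (434 * t * (n - 1)) := by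
    calc ∑ i, ∑ j, g i j ≤ ∑ i, ∑ j, (f i j + 432 * t * (if i = j then 0 else 1)) :=
          Finset.sum_le_sum fun i _ => Finset.sum_le_sum fun j _ => hgf i j
      _ = ∑ i : Fin n, (434 * t * (n - 1)) := by
          simp only [Finset.sum_add_distrib, ← Finset.mul_sum, e1, hsum]
          simp
          ring
  obtain ⟨i, -, hi⟩ := Finset.exists_le_of_sum_le ⟨⟨0, by omega⟩, mem_univ _⟩ hgs
  refine ⟨y i, ?_⟩
  have hsplit := Finset.card_filter_add_card_filter_not (s := (univ : Finset (Fin n)))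
    (fun j : Fin n => y j ∈ Metric.ball (y i) r)
  set B := Finset.univ.filter (fun j : Fin n => ¬ y j ∈ Metric.ball (y i) r) with hB
  have hBb : (B.card : ℝ) * (r ^ 2 / 2) ≤ 434 * t * (n - 1) := by
    calc (B.card : ℝ) * (r ^ 2 / 2) = ∑ j ∈ B, r ^ 2 / 2 := by simp
      _ ≤ ∑ j ∈ B, g i j := by
          refine Finset.sum_le_sum fun j hj => ?_
          simp only [hB, Finset.mem_filter, mem_univ, true_and, Metric.mem_ball, not_lt] at hj
          rw [dist_comm, dist_eq_norm] at hj
          have h1 : r ^ 2 ≤ d i j := by simp only [hd]; gcongr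
          have h2 := hd0 i j
          simp only [hg]
          rw [le_div_iff₀ (by linarith)]
          have : r ^ 2 ≤ 1 := pow_le_one₀ hr.le hr1
          nlinarith
      _ ≤ ∑ j, g i j := Finset.sum_le_univ_sum_of_nonneg (fun j => hg0 i j)
      _ ≤ _ := hi
  have hBr : (B.card : ℝ) ≤ r * n := by
    have h1 : 434 * t * ((n:ℝ) - 1) ≤ (r * n) * (r ^ 2 / 2) := by
      have : 434 * t ≤ r ^ 3 / 2 := by nlinarith [pow_pos hr 3]
      calc 434 * t * ((n:ℝ) - 1) ≤ r ^ 3 / 2 * n := by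
            apply mul_le_mul this (by linarith) (by linarith) (by positivity)
        _ = _ := by ring
    exact le_of_mul_le_mul_right (hBb.trans h1) (by positivity)
  have : ((Finset.univ.filter (fun j : Fin n => y j ∈ Metric.ball (y i) r)).card : ℝ) + B.card = n := by
    rw [← Nat.cast_add, hsplit]; simp
  linarith

/-- if `r(n) → 0` and `d_TV(U_n, Q_n)/r(n)³ → 0`, then for all sufficiently
large `n` there is an open ball of radius `r(n)` in `ℝ²` containing at least `(1 - r(n))·n`
of the points `y_1, …, y_n`. -/
theorem stmt8 (y : (n : ℕ) → Fin n → EuclideanSpace ℝ (Fin 2))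
    (r : ℕ → ℝ) (hr : ∀ n, 0 < r n) (hr0 : Tendsto r atTop (nhds 0))
    (htv : Tendsto (fun n => dTVtoUnif (y n) / r n ^ 3) atTop (nhds 0)) :
    ∀ᶠ n in atTop, ∃ c : EuclideanSpace ℝ (Fin 2),
      (1 - r n) * n ≤
        (Finset.univ.filter (fun i : Fin n => y n i ∈ Metric.ball c (r n))).card := by
  have h1 : ∀ᶠ n in atTop, dTVtoUnif (y n) / r n ^ 3 < 1 / 1000 :=
    htv.eventually_lt_const (by norm_num)
  have h2 : ∀ᶠ n in atTop, r n < 1 := hr0.eventually_lt_const (by norm_num)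
  filter_upwards [h1, h2, eventually_ge_atTop 4] with n a1 a2 a3
  refine aux_main a3 (y n) (r n) (hr n) a2.le ?_
  have := hr n
  rw [div_lt_iff₀ (by positivity)] at a1
  linarith

end
end

section
/- Let a > 0 and 0 < ε ≤ 0.17. Let p, q ∈ ℝ² satisfy (1−ε)a ≤ ‖p − q‖ ≤ (1+ε)a. Suppose u, v ∈ ℝ² each lie in the intersection of the two closed annuli centered at p and at q with inner radius (1−ε)a and outer radius (1+ε)a; that is, (1−ε)a ≤ ‖u−p‖ ≤ (1+ε)a, (1−ε)a ≤ ‖u−q‖ ≤ (1+ε)a, and likewise for v. Then ‖u − v‖ ∉ [(1−ε)a, (1+ε)a]. -/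
def dt (x y : Fin 4 → ℝ) (i j k : Fin 4) : ℝ :=
  (x j - x i) * (x k - x i) + (y j - y i) * (y k - y i)

lemma l13 (x y : Fin 4 → ℝ) (l : Fin 4 → ℝ) (i j k m : Fin 4)
    (h0 : l i + l j + l k + l m = 0)
    (hx : l i * x i + l j * x j + l k * x k + l m * x m = 0)
    (hy : l i * y i + l j * y j + l k * y k + l m * y m = 0)
    (a : 0 < dt x y i j k) (b : 0 < dt x y i j m)
    (hj : 0 < l j) (hk : 0 < l k) (hm : 0 < l m) : False := by
  have e : l j * ((x j - x i)^2 + (y j - y i)^2) + l k * dt x y i j k + l m * dt x y i j m = 0 := by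
    unfold dt
    linear_combination (x j - x i) * hx + (y j - y i) * hy - (x i * (x j - x i) + y i * (y j - y i)) * h0
  have := mul_pos hk a
  have := mul_pos hm b
  have : 0 ≤ l j * ((x j - x i)^2 + (y j - y i)^2) := by positivity
  linarith

lemma l22 (x y : Fin 4 → ℝ) (l : Fin 4 → ℝ) (i j k m : Fin 4)
    (h0 : l i + l j + l k + l m = 0)
    (hx : l i * x i + l j * x j + l k * x k + l m * x m = 0)
    (hy : l i * y i + l j * y j + l k * y k + l m * y m = 0)
    (a : 0 < dt x y i j m) (b : 0 < dt x y j i k) (c : 0 < dt x y k j m) (d : 0 < dt x y m i k)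
    (hi : 0 < l i) (hj : l j < 0) (hk : 0 < l k) (hm : l m < 0) : False := by
  have e : l i * dt x y i j m - l j * dt x y j i k + l k * dt x y k j m - l m * dt x y m i k = 0 := by
    unfold dt
    linear_combination (x i + x k - x j - x m) * hx + (y i + y k - y j - y m) * hy + (x j * x m + y j * y m - x i * x k - y i * y k) * h0
  have := mul_pos hi a
  have := mul_pos hk c
  have := mul_neg_of_neg_of_pos hj b
  have := mul_neg_of_neg_of_pos hm d
  linarith

lemma nz (x y : Fin 4 → ℝ) (i j k : Fin 4)
    (a : 0 < dt x y i j k) (b : 0 < dt x y j i k) (c : 0 < dt x y k i j) :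
    (x j - x i) * (y k - y i) - (x k - x i) * (y j - y i) ≠ 0 := by
  intro h
  have e : ((x j - x i) * (y k - y i) - (x k - x i) * (y j - y i))^2
    = dt x y i j k * dt x y j i k + dt x y i j k * dt x y k i j + dt x y j i k * dt x y k i j := by
    unfold dt; ring
  rw [h] at e
  have := mul_pos a b
  have := mul_pos a c
  have := mul_pos b c
  linarith

lemma core_s9 (x y : Fin 4 → ℝ)
    (H : ∀ i j k : Fin 4, i ≠ j → i ≠ k → j ≠ k → 0 < dt x y i j k) : False := by
  let T : Fin 4 → Fin 4 → Fin 4 → ℝ := fun i j k =>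
    (x j - x i) * (y k - y i) - (x k - x i) * (y j - y i)
  have hT : ∀ i j k : Fin 4, i ≠ j → i ≠ k → j ≠ k → T i j k ≠ 0 := fun i j k h1 h2 h3 =>
    nz x y i j k (H _ _ _ h1 h2 h3) (H _ _ _ h1.symm h3 h2) (H _ _ _ h2.symm h3.symm h1)
  obtain ⟨l, hl⟩ : ∃ l : Fin 4 → ℝ, l = ![T 1 2 3, - T 0 2 3, T 0 1 3, - T 0 1 2] := ⟨_, rfl⟩
  have l0 : l 0 = T 1 2 3 := by rw [hl]; rfl
  have l1 : l 1 = - T 0 2 3 := by rw [hl]; rfl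
  have l2 : l 2 = T 0 1 3 := by rw [hl]; rfl
  have l3 : l 3 = - T 0 1 2 := by rw [hl]; rfl
  have n0 : l 0 ≠ 0 := by rw [l0]; exact hT _ _ _ (by decide) (by decide) (by decide)
  have n1 : l 1 ≠ 0 := by rw [l1]; exact neg_ne_zero.2 (hT _ _ _ (by decide) (by decide) (by decide))
  have n2 : l 2 ≠ 0 := by rw [l2]; exact hT _ _ _ (by decide) (by decide) (by decide)
  have n3 : l 3 ≠ 0 := by rw [l3]; exact neg_ne_zero.2 (hT _ _ _ (by decide) (by decide) (by decide))
  have h0 : l 0 + l 1 + l 2 + l 3 = 0 := by rw [l0, l1, l2, l3]; simp only [T]; ring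
  have hx : l 0 * x 0 + l 1 * x 1 + l 2 * x 2 + l 3 * x 3 = 0 := by
    rw [l0, l1, l2, l3]; simp only [T]; ring
  have hy : l 0 * y 0 + l 1 * y 1 + l 2 * y 2 + l 3 * y 3 = 0 := by
    rw [l0, l1, l2, l3]; simp only [T]; ring
  clear l0 l1 l2 l3 hl hT
  clear T
  have A : ∀ (l : Fin 4 → ℝ) (i j k m : Fin 4), i ≠ j → i ≠ k → i ≠ m → j ≠ k → j ≠ m → 
    l i + l j + l k + l m = 0 → l i * x i + l j * x j + l k * x k + l m * x m = 0 →
    l i * y i + l j * y j + l k * y k + l m * y m = 0 → 0 < l j → 0 < l k → 0 < l m → False :=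
    fun l i j k m a b c d e h0 hx hy => l13 x y l i j k m h0 hx hy (H _ _ _ a b d) (H _ _ _ a c e)
  have B : ∀ (i j k m : Fin 4), i ≠ j → i ≠ k → i ≠ m → j ≠ k → j ≠ m → k ≠ m →
    l i + l j + l k + l m = 0 → l i * x i + l j * x j + l k * x k + l m * x m = 0 →
    l i * y i + l j * y j + l k * y k + l m * y m = 0 → 0 < l i → l j < 0 → 0 < l k → l m < 0 → False :=
    fun i j k m a b c d e f h0 hx hy => l22 x y l i j k m h0 hx hy (H _ _ _ a c e)
      (H _ _ _ a.symm d b) (H _ _ _ d.symm f e) (H _ _ _ c.symm f.symm b)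
  have C : ∀ (i j k m : Fin 4), i ≠ j → i ≠ k → i ≠ m → j ≠ k → j ≠ m → 
    l i + l j + l k + l m = 0 → l i * x i + l j * x j + l k * x k + l m * x m = 0 →
    l i * y i + l j * y j + l k * y k + l m * y m = 0 → l j < 0 → l k < 0 → l m < 0 → False :=
    fun i j k m a b c d e h0 hx hy hj hk hm => A (fun i => - l i) i j k m a b c d e
      (by linarith) (by linarith) (by linarith) (by simpa) (by simpa) (by simpa)
  have A := A l
  rcases lt_or_gt_of_ne n0 with s0 | s0 <;> rcases lt_or_gt_of_ne n1 with s1 | s1 <;>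
  rcases lt_or_gt_of_ne n2 with s2 | s2 <;> rcases lt_or_gt_of_ne n3 with s3 | s3 <;>
  first
  | exact A 0 1 2 3 (by decide) (by decide) (by decide) (by decide) (by decide) (by linarith) (by linarith) (by linarith) s1 s2 s3
  | exact A 1 0 2 3 (by decide) (by decide) (by decide) (by decide) (by decide) (by linarith) (by linarith) (by linarith) s0 s2 s3
  | exact A 2 0 1 3 (by decide) (by decide) (by decide) (by decide) (by decide) (by linarith) (by linarith) (by linarith) s0 s1 s3
  | exact A 3 0 1 2 (by decide) (by decide) (by decide) (by decide) (by decide) (by linarith) (by linarith) (by linarith) s0 s1 s2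
  | exact C 0 1 2 3 (by decide) (by decide) (by decide) (by decide) (by decide) (by linarith) (by linarith) (by linarith) s1 s2 s3
  | exact C 1 0 2 3 (by decide) (by decide) (by decide) (by decide) (by decide) (by linarith) (by linarith) (by linarith) s0 s2 s3
  | exact C 2 0 1 3 (by decide) (by decide) (by decide) (by decide) (by decide) (by linarith) (by linarith) (by linarith) s0 s1 s3
  | exact C 3 0 1 2 (by decide) (by decide) (by decide) (by decide) (by decide) (by linarith) (by linarith) (by linarith) s0 s1 s2
  | exact B 0 1 2 3 (by decide) (by decide) (by decide) (by decide) (by decide) (by decide) (by linarith) (by linarith) (by linarith) s0 s1 s2 s3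
  | exact B 0 1 3 2 (by decide) (by decide) (by decide) (by decide) (by decide) (by decide) (by linarith) (by linarith) (by linarith) s0 s1 s3 s2
  | exact B 0 2 1 3 (by decide) (by decide) (by decide) (by decide) (by decide) (by decide) (by linarith) (by linarith) (by linarith) s0 s2 s1 s3
  | exact B 1 0 2 3 (by decide) (by decide) (by decide) (by decide) (by decide) (by decide) (by linarith) (by linarith) (by linarith) s1 s0 s2 s3
  | exact B 1 0 3 2 (by decide) (by decide) (by decide) (by decide) (by decide) (by decide) (by linarith) (by linarith) (by linarith) s1 s0 s3 s2
  | exact B 2 0 3 1 (by decide) (by decide) (by decide) (by decide) (by decide) (by decide) (by linarith) (by linarith) (by linarith) s2 s0 s3 s1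

lemma sqb (a ε : ℝ) (ha : 0 < a) (hε : 0 < ε) (hε' : ε ≤ 0.17)
    (p q : EuclideanSpace ℝ (Fin 2))
    (h₁ : (1 - ε) * a ≤ ‖p - q‖) (h₂ : ‖p - q‖ ≤ (1 + ε) * a) :
    ((1 - ε) * a)^2 ≤ (p 0 - q 0)^2 + (p 1 - q 1)^2 ∧
    (p 0 - q 0)^2 + (p 1 - q 1)^2 < 2 * ((1 - ε) * a)^2 := by
  have e : ‖p - q‖^2 = (p 0 - q 0)^2 + (p 1 - q 1)^2 := by
    rw [EuclideanSpace.norm_sq_eq]; simp [Fin.sum_univ_two]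
  norm_num at hε'
  have hp : 0 < (1 - ε) * a := mul_pos (by linarith) ha
  rw [← e]
  refine ⟨pow_le_pow_left₀ hp.le h₁ 2, lt_of_le_of_lt (pow_le_pow_left₀ (norm_nonneg _) h₂ 2) ?_⟩
  have : (1 + ε)^2 < 2 * (1 - ε)^2 := by nlinarith
  have := mul_lt_mul_of_pos_right this (pow_pos ha 2)
  nlinarith

/-- if `p, q ∈ ℝ²` are at distance in `[(1-ε)a, (1+ε)a]` with `0 < ε ≤ 0.17`,
and `u, v` each lie in the intersection of the closed annuli centered at `p` and at `q` with
inner radius `(1-ε)a` and outer radius `(1+ε)a`, then `‖u - v‖ ∉ [(1-ε)a, (1+ε)a]`. -/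
theorem stmt9 (a ε : ℝ) (ha : 0 < a) (hε : 0 < ε) (hε' : ε ≤ 0.17)
    (p q u v : EuclideanSpace ℝ (Fin 2))
    (hpq₁ : (1 - ε) * a ≤ ‖p - q‖) (hpq₂ : ‖p - q‖ ≤ (1 + ε) * a)
    (hup₁ : (1 - ε) * a ≤ ‖u - p‖) (hup₂ : ‖u - p‖ ≤ (1 + ε) * a)
    (huq₁ : (1 - ε) * a ≤ ‖u - q‖) (huq₂ : ‖u - q‖ ≤ (1 + ε) * a)
    (hvp₁ : (1 - ε) * a ≤ ‖v - p‖) (hvp₂ : ‖v - p‖ ≤ (1 + ε) * a)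
    (hvq₁ : (1 - ε) * a ≤ ‖v - q‖) (hvq₂ : ‖v - q‖ ≤ (1 + ε) * a) :
    ‖u - v‖ ∉ Set.Icc ((1 - ε) * a) ((1 + ε) * a) := by
  rintro ⟨huv₁, huv₂⟩
  obtain ⟨a1, b1⟩ := sqb a ε ha hε hε' _ _ hpq₁ hpq₂
  obtain ⟨a2, b2⟩ := sqb a ε ha hε hε' _ _ hup₁ hup₂
  obtain ⟨a3, b3⟩ := sqb a ε ha hε hε' _ _ huq₁ huq₂
  obtain ⟨a4, b4⟩ := sqb a ε ha hε hε' _ _ hvp₁ hvp₂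
  obtain ⟨a5, b5⟩ := sqb a ε ha hε hε' _ _ hvq₁ hvq₂
  obtain ⟨a6, b6⟩ := sqb a ε ha hε hε' _ _ huv₁ huv₂
  refine core_s9 ![p 0, q 0, u 0, v 0] ![p 1, q 1, u 1, v 1] ?_
  generalize ((1 - ε) * a)^2 = M at *
  intro i j k hij hik hjk
  fin_cases i <;> fin_cases j <;> first | exact absurd rfl hij | skip
  all_goals fin_cases k <;> first | exact absurd rfl hik | exact absurd rfl hjk | skip
  all_goals
    simp [dt]
    linarith
end
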